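/- arXiv:2309.13576 — 3 statements merged into one kernel-verified Lean document; each statement's English description precedes it below -/
import Mathlib

section
/- Let X be a compact metric space and f : X → X a continuous map whose topological entropy is zero. Then for every continuous function φ : X → ℂ and every point x ∈ X, the averages (1/p) ∑_{0 ≤ n < p} (n/p) φ(fⁿ(x)) converge to 0 as p tends to infinity over the odd primes, where (n/p) denotes the Legendre symbol of n modulo p. -/
open Filter MeasureTheory

open Classical in
/-- The Legendre symbol `(n/p)`: `0` if `p ∣ n`, `1` if `n` is a nonzero quadratic residue
mod `p`, and `-1` otherwise. -/
noncomputable def legendre (p n : ℕ) : ℤ :=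
  if (n : ZMod p) = 0 then 0 else if IsSquare ((n : ZMod p)) then 1 else -1

open Polynomial in
/-- twisted derivation -/
noncomputable def stepT {F : Type*} [Field F] (f : F[X]) (c : F) : F[X] →ₗ[F] F[X] :=
  (LinearMap.mulLeft F f) ∘ₗ derivative + c • LinearMap.mulLeft F (derivative f)

open Polynomial in
/-- iterated twisted derivation -/
noncomputable def stepU {F : Type*} [Field F] (f : F[X]) (c : F) : ℕ → (F[X] →ₗ[F] F[X])
  | 0 => LinearMap.id
  | k + 1 => stepT f (c - k) ∘ₗ stepU f c k

namespace Stepanov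
open Polynomial

lemma natDegree_stepT {F : Type*} [Field F] (f : F[X]) (c : F) (w : F[X]) :
    (stepT f c w).natDegree ≤ w.natDegree + f.natDegree := by
  simp only [stepT, LinearMap.add_apply, LinearMap.comp_apply, LinearMap.smul_apply,
    LinearMap.mulLeft_apply]
  refine (natDegree_add_le _ _).trans (max_le ?_ ?_)
  · refine natDegree_mul_le.trans ?_
    have := natDegree_derivative_le w
    omega
  · refine (natDegree_smul_le _ _).trans (natDegree_mul_le.trans ?_)
    have := natDegree_derivative_le f
    omega

lemma natDegree_stepU {F : Type*} [Field F] (f : F[X]) (c : F) (w : F[X]) (k : ℕ) :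
    (stepU f c k w).natDegree ≤ w.natDegree + k * f.natDegree := by
  induction k with
  | zero => simp [stepU]
  | succ k ih =>
    have := natDegree_stepT f (c - k) (stepU f c k w)
    simp only [stepU, LinearMap.comp_apply]
    rw [add_mul]
    omega

lemma iterate_derivative {F : Type*} [Field F] (f w Y : F[X]) (hY : derivative Y = 0)
    (N k : ℕ) (hk : k ≤ N) :
    derivative^[k] (f ^ N * w * Y) = f ^ (N - k) * stepU f (N : F) k w * Y := by
  induction k with
  | zero => simp [stepU]
  | succ k ih =>
    rw [Function.iterate_succ_apply', ih (by omega)]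
    obtain ⟨M, rfl⟩ : ∃ M, N = k + 1 + M := ⟨N - (k+1), by omega⟩
    have h1 : k + 1 + M - k = M + 1 := by omega
    have h2 : k + 1 + M - (k + 1) = M := by omega
    rw [h1, h2]
    simp only [stepU, stepT, LinearMap.comp_apply, LinearMap.add_apply, LinearMap.smul_apply,
      LinearMap.mulLeft_apply, derivative_mul, hY, derivative_pow, smul_eq_C_mul]
    push_cast
    simp only [C_sub, C_add, C_1, map_natCast]
    simp
    left
    ring

lemma nonvanish_aux {p : ℕ} [Fact p.Prime] (hp : p ≠ 2) (f : (ZMod p)[X]) (hf0 : f.eval 0 ≠ 0)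
    (α : ZMod p) (hα : f.rootMultiplicity α = 1) (r s : (ZMod p)[X])
    (A : ℕ) (hA : 2 * A + f.natDegree ≤ p) (hr : r.degree < A) (hs : s.degree < A)
    (h : X ^ p ∣ r + s * f ^ (p / 2)) : r = 0 ∧ s = 0 := by
  have hpp : p.Prime := Fact.out
  have hodd : 2 * (p / 2) + 1 = p := by
    have := hpp.eq_two_or_odd; omega
  have hfne : f ≠ 0 := by rintro rfl; simp at hf0
  have e1 : (X : (ZMod p)[X]) ^ p ∣ f * r ^ 2 - s ^ 2 * f ^ p := by
    have : f * r ^ 2 - s ^ 2 * f ^ p = (r + s * f ^ (p/2)) * (f * (r - s * f ^ (p/2))) := by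
      have : f ^ p = f ^ (2 * (p/2) + 1) := by rw [hodd]
      rw [this]; ring
    rw [this]
    exact h.mul_right _
  have e2 : (X : (ZMod p)[X]) ^ p ∣ f ^ p - C (f.eval 0) := by
    have h1 : (X : (ZMod p)[X]) ∣ f - C (f.eval 0) := by
      rw [X_dvd_iff]; simp [coeff_zero_eq_eval_zero]
    have h2 := map_dvd (expand (ZMod p) p) h1
    rwa [map_sub, expand_X, expand_C, ZMod.expand_card] at h2
  have e3 : (X : (ZMod p)[X]) ^ p ∣ f * r ^ 2 - C (f.eval 0) * s ^ 2 := by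
    have : f * r ^ 2 - C (f.eval 0) * s ^ 2 = (f * r ^ 2 - s ^ 2 * f ^ p) +
      s ^ 2 * (f ^ p - C (f.eval 0)) := by ring
    rw [this]
    exact dvd_add e1 (e2.mul_left _)
  by_cases hA0 : A = 0
  · subst hA0
    constructor
    · by_contra h0
      rw [degree_eq_natDegree h0] at hr
      exact absurd hr (by simp)
    · by_contra h0
      rw [degree_eq_natDegree h0] at hs
      exact absurd hs (by simp)
  have hA1 : 0 < A := Nat.pos_of_ne_zero hA0
  have nr : r.natDegree < A := by
    by_cases h0 : r = 0
    · simpa [h0]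
    · exact (natDegree_lt_iff_degree_lt h0).2 hr
  have ns : s.natDegree < A := by
    by_cases h0 : s = 0
    · simpa [h0]
    · exact (natDegree_lt_iff_degree_lt h0).2 hs
  have e4 : f * r ^ 2 - C (f.eval 0) * s ^ 2 = 0 := by
    by_contra hne
    have h1 := natDegree_le_of_dvd e3 hne
    rw [natDegree_X_pow] at h1
    have h2 : (f * r ^ 2 - C (f.eval 0) * s ^ 2).natDegree < p := by
      refine (natDegree_sub_le _ _).trans_lt (max_lt ?_ ?_)
      · have := natDegree_mul_le (p := f) (q := r ^ 2)
        have := natDegree_pow_le (p := r) (n := 2)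
        omega
      · have := natDegree_C_mul_le (f.eval 0) (s ^ 2)
        have := natDegree_pow_le (p := s) (n := 2)
        omega
    omega
  rw [sub_eq_zero] at e4
  by_cases hr0 : r = 0
  · refine ⟨hr0, ?_⟩
    rw [hr0] at e4
    simp only [ne_eq, OfNat.ofNat_ne_zero, not_false_eq_true, zero_pow, mul_zero] at e4
    have := e4.symm
    rw [mul_eq_zero, C_eq_zero] at this
    exact pow_eq_zero_iff (two_ne_zero) |>.1 (this.resolve_left hf0)
  · exfalso
    have hne : f * r ^ 2 ≠ 0 := mul_ne_zero hfne (pow_ne_zero _ hr0)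
    have hs0 : s ≠ 0 := by
      rintro rfl
      apply hne; rw [e4]; simp
    have m1 := rootMultiplicity_mul (x := α) hne
    have hne2 : C (f.eval 0) * s ^ 2 ≠ 0 := e4 ▸ hne
    have m2 := rootMultiplicity_mul (x := α) hne2
    rw [rootMultiplicity_C] at m2
    have q1 : ∀ q : (ZMod p)[X], q ≠ 0 → (q ^ 2).rootMultiplicity α = 2 * q.rootMultiplicity α := by
      intro q hq
      rw [pow_two, rootMultiplicity_mul (mul_ne_zero hq hq)]; ring
    rw [q1 r hr0, hα] at m1
    rw [q1 s hs0, ← e4, m1] at m2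
    omega

lemma nonvanish {p : ℕ} [Fact p.Prime] (hp : p ≠ 2) (f : (ZMod p)[X]) (hf0 : f.eval 0 ≠ 0)
    (α : ZMod p) (hα : f.rootMultiplicity α = 1) {J : ℕ} (r s : Fin J → (ZMod p)[X])
    (A : ℕ) (hA : 2 * A + f.natDegree ≤ p) (hr : ∀ j, (r j).degree < A)
    (hs : ∀ j, (s j).degree < A)
    (h : ∑ j, (r j + s j * f ^ (p / 2)) * X ^ (p * (j : ℕ)) = 0) : ∀ j, r j = 0 ∧ s j = 0 := by
  have key : ∀ n : ℕ, ∀ j : Fin J, (j : ℕ) = n → r j = 0 ∧ s j = 0 := by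
    intro n
    induction n using Nat.strong_induction_on with
    | _ n ih =>
      intro j hj
      refine nonvanish_aux hp f hf0 α hα _ _ A hA (hr j) (hs j) ?_
      rw [← Finset.add_sum_erase _ _ (Finset.mem_univ j)] at h
      have h2 : X ^ (p * (j + 1 : ℕ)) ∣ ∑ i ∈ Finset.univ.erase j,
          (r i + s i * f ^ (p / 2)) * X ^ (p * (i : ℕ)) := by
        refine Finset.dvd_sum fun i hi => ?_
        have hij : i ≠ j := (Finset.mem_erase.1 hi).1
        have hij' : (i : ℕ) ≠ j := fun h => hij (Fin.ext h)
        rcases lt_or_gt_of_ne hij' with h1 | h1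
        · obtain ⟨a, b⟩ := ih i (hj ▸ h1) i rfl
          simp [a, b]
        · exact Dvd.dvd.mul_left (pow_dvd_pow _ (Nat.mul_le_mul_left _ h1)) _
      have h3 : X ^ (p * (j + 1 : ℕ)) ∣ (r j + s j * f ^ (p / 2)) * X ^ (p * (j : ℕ)) := by
        rw [eq_neg_of_add_eq_zero_left h]
        exact (dvd_neg).2 h2
      rw [mul_add, mul_one, add_comm, pow_add] at h3
      exact (mul_dvd_mul_iff_right (pow_ne_zero _ X_ne_zero)).1 h3
  exact fun j => key j j rfl


lemma natDegree_lt_of_mem {F : Type*} [Field F] {A : ℕ} (hA : 0 < A) (r : degreeLT F A) :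
    (r : F[X]).natDegree < A := by
  by_cases h0 : (r : F[X]) = 0
  · simpa [h0]
  · exact (natDegree_lt_iff_degree_lt h0).2 (mem_degreeLT.1 r.2)

/-- the linear system -/
noncomputable def sys {F : Type*} [Field F] (f : F[X]) (a c d : F) (J A l B : ℕ) :
    ((Fin J → degreeLT F A) × (Fin J → degreeLT F A)) →ₗ[F] (Fin l × Fin B → F) where
  toFun u q := (∑ j, (stepU f c q.1 (u.1 j : F[X]) + a • stepU f d q.1 (u.2 j : F[X])) *
    X ^ (j : ℕ)).coeff q.2
  map_add' u v := by
    funext q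
    simp only [Prod.fst_add, Prod.snd_add, Pi.add_apply, Submodule.coe_add, map_add, ← coeff_add,
      ← Finset.sum_add_distrib]
    congr 1
    refine Finset.sum_congr rfl fun j _ => ?_
    rw [smul_add]; ring
  map_smul' e u := by
    funext q
    simp only [Prod.smul_fst, Prod.smul_snd, Pi.smul_apply, Submodule.coe_smul, map_smul,
      RingHom.id_apply, ← coeff_smul, Finset.smul_sum]
    congr 1
    refine Finset.sum_congr rfl fun j _ => ?_
    rw [smul_comm a e, ← smul_add, smul_mul_assoc]

lemma count {p : ℕ} [Fact p.Prime] (hp : p ≠ 2) (f : (ZMod p)[X]) (hf0 : f.eval 0 ≠ 0)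
    (α : ZMod p) (hα : f.rootMultiplicity α = 1) (t A : ℕ) (ht : 0 < t)
    (hA : 2 * A + f.natDegree ≤ p) (hA2 : t * (2 * t * f.natDegree + t + 1) < A) (a : ZMod p) :
    2 * t * (Finset.univ.filter fun x : ZMod p => f.eval x ^ (p / 2) = a).card
      ≤ 2 * t * f.natDegree + p + f.natDegree * p + t * p := by
  have hpp : p.Prime := Fact.out
  set m := f.natDegree with hm
  set B := A + 2 * t * m + (t + 1) with hB
  have hA1 : 0 < A := by omega
  have htA : t < A := lt_of_le_of_lt (Nat.le_mul_of_pos_right t (by omega)) hA2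
  have hfne : f ≠ 0 := by rintro rfl; simp at hf0
  obtain ⟨u, hu, hu0⟩ : ∃ u, sys f a ((2 * t : ℕ) : ZMod p) ((2 * t + p / 2 : ℕ) : ZMod p)
      (t + 1) A (2 * t) B u = 0 ∧ u ≠ 0 := by
    have : LinearMap.ker (sys f a ((2 * t : ℕ) : ZMod p) ((2 * t + p / 2 : ℕ) : ZMod p)
        (t + 1) A (2 * t) B) ≠ ⊥ := by
      have : FiniteDimensional (ZMod p) (degreeLT (ZMod p) A) :=
        (degreeLTEquiv (ZMod p) A).symm.finiteDimensional
      apply LinearMap.ker_ne_bot_of_finrank_lt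
      have h1 : Module.finrank (ZMod p) (degreeLT (ZMod p) A) = A := by
        rw [(degreeLTEquiv (ZMod p) A).finrank_eq]; simp
      have h2 : Module.finrank (ZMod p) (Fin (t + 1) → degreeLT (ZMod p) A) = (t + 1) * A := by
        rw [Module.finrank_pi_fintype]
        simp [h1]
      rw [Module.finrank_prod, h2, Module.finrank_fintype_fun_eq_card, Fintype.card_prod,
        Fintype.card_fin, Fintype.card_fin, hB]
      nlinarith
    obtain ⟨u, hu, h0⟩ := Submodule.exists_mem_ne_zero_of_ne_bot this
    exact ⟨u, hu, h0⟩
  have hσ : ∀ k < 2 * t, ∑ j, (stepU f ((2 * t : ℕ) : ZMod p) k (u.1 j : (ZMod p)[X]) +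
      a • stepU f ((2 * t + p / 2 : ℕ) : ZMod p) k (u.2 j : (ZMod p)[X])) * X ^ (j : ℕ) = 0 := by
    intro k hk
    set σ := ∑ j, (stepU f ((2 * t : ℕ) : ZMod p) k (u.1 j : (ZMod p)[X]) +
      a • stepU f ((2 * t + p / 2 : ℕ) : ZMod p) k (u.2 j : (ZMod p)[X])) * X ^ (j : ℕ) with hσd
    have hd : σ.natDegree < B := by
      have : σ.natDegree ≤ A + 2 * t * m + t := by
        refine natDegree_sum_le_of_forall_le _ _ fun j _ => ?_
        refine natDegree_mul_le.trans ?_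
        rw [natDegree_X_pow]
        have hj : (j : ℕ) ≤ t := by omega
        refine add_le_add ?_ hj
        have hkm : k * m ≤ 2 * t * m := Nat.mul_le_mul_right _ hk.le
        refine (natDegree_add_le _ _).trans (max_le ?_ ?_)
        · have h1 := natDegree_stepU f ((2 * t : ℕ) : ZMod p) (u.1 j : (ZMod p)[X]) k
          rw [← hm] at h1
          have h2 := natDegree_lt_of_mem hA1 (u.1 j)
          omega
        · refine (natDegree_smul_le _ _).trans ?_
          have h1 := natDegree_stepU f ((2 * t + p / 2 : ℕ) : ZMod p) (u.2 j : (ZMod p)[X]) k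
          rw [← hm] at h1
          have h2 := natDegree_lt_of_mem hA1 (u.2 j)
          omega
      omega
    ext i
    by_cases hi : i < B
    · have := congrFun hu (⟨k, hk⟩, ⟨i, hi⟩)
      exact this
    · rw [coeff_eq_zero_of_natDegree_lt (by omega), coeff_zero]
  set Q := ∑ j, ((u.1 j : (ZMod p)[X]) + (u.2 j : (ZMod p)[X]) * f ^ (p / 2)) *
    X ^ (p * (j : ℕ)) with hQ
  have hQ0 : Q ≠ 0 := by
    intro h0
    have := nonvanish hp f hf0 α hα (fun j => (u.1 j : (ZMod p)[X])) (fun j => (u.2 j : (ZMod p)[X]))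
      A hA (fun j => mem_degreeLT.1 (u.1 j).2) (fun j => mem_degreeLT.1 (u.2 j).2) h0
    apply hu0
    refine Prod.ext (funext fun j => Subtype.ext (this j).1) (funext fun j => Subtype.ext (this j).2)
  have hR0 : f ^ (2 * t) * Q ≠ 0 := mul_ne_zero (pow_ne_zero _ hfne) hQ0
  have hmult : ∀ x : ZMod p, f.eval x ^ (p / 2) = a →
      2 * t ≤ (f ^ (2 * t) * Q).rootMultiplicity x := by
    intro x hx
    have : 2 * t - 1 < (f ^ (2 * t) * Q).rootMultiplicity x := by
      apply lt_rootMultiplicity_of_isRoot_iterate_derivative_of_mem_nonZeroDivisors' hR0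
      · intro k hk
        have hk' : k < 2 * t := by omega
        have e1 : f ^ (2 * t) * Q = ∑ j : Fin (t + 1),
            (f ^ (2 * t) * (u.1 j : (ZMod p)[X]) * X ^ (p * (j : ℕ)) +
            f ^ (2 * t + p / 2) * (u.2 j : (ZMod p)[X]) * X ^ (p * (j : ℕ))) := by
          rw [hQ, Finset.mul_sum]
          refine Finset.sum_congr rfl fun j _ => ?_
          ring
        have hY : ∀ j : ℕ, derivative ((X : (ZMod p)[X]) ^ (p * j)) = 0 := by
          intro j
          rw [derivative_X_pow]; simp
        rw [IsRoot.def, e1, iterate_derivative_sum, eval_finsetSum]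
        have e2 := congrArg (eval x) (hσ k hk')
        rw [eval_finsetSum, eval_zero] at e2
        rw [← mul_zero (f.eval x ^ (2 * t - k)), ← e2, Finset.mul_sum]
        refine Finset.sum_congr rfl fun j _ => ?_
        rw [iterate_map_add, iterate_derivative _ _ _ (hY _) _ _ hk'.le,
          iterate_derivative _ _ _ (hY _) _ _ (by omega)]
        have e3 : 2 * t + p / 2 - k = (2 * t - k) + p / 2 := by omega
        rw [e3]
        simp only [eval_add, eval_mul, eval_pow, eval_X, eval_smul, smul_eq_mul, pow_add, hx,
          pow_mul, ZMod.pow_card]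
        ring
      · intro k hk hk0
        rw [mem_nonZeroDivisors_iff_ne_zero, Ne, ZMod.natCast_eq_zero_iff]
        intro hd
        have := Nat.le_of_dvd (Nat.pos_of_ne_zero hk0) hd
        omega
    omega
  have hdeg : (f ^ (2 * t) * Q).natDegree ≤ 2 * t * m + p + m * p + t * p := by
    refine natDegree_mul_le.trans ?_
    have h1 : (f ^ (2 * t)).natDegree ≤ 2 * t * m := natDegree_pow_le
    have h2 : Q.natDegree ≤ p + m * p + t * p := by
      refine natDegree_sum_le_of_forall_le _ _ fun j _ => ?_
      refine natDegree_mul_le.trans ?_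
      rw [natDegree_X_pow]
      have hj : p * (j : ℕ) ≤ t * p := by
        rw [mul_comm]; exact Nat.mul_le_mul_right _ (by omega)
      refine add_le_add ?_ hj
      refine (natDegree_add_le _ _).trans (max_le ?_ ?_)
      · have h2 := natDegree_lt_of_mem hA1 (u.1 j)
        have : 0 ≤ m * p := Nat.zero_le _
        omega
      · refine natDegree_mul_le.trans ?_
        have h2 := natDegree_lt_of_mem hA1 (u.2 j)
        have h3 : (f ^ (p / 2)).natDegree ≤ (p / 2) * m := natDegree_pow_le
        have h4 : (p / 2) * m ≤ m * p := by
          rw [mul_comm]; exact Nat.mul_le_mul_left _ (Nat.div_le_self _ _)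
        omega
    omega
  refine le_trans ?_ ((card_roots' (f ^ (2 * t) * Q)).trans hdeg)
  classical
  set S := Finset.univ.filter fun x : ZMod p => f.eval x ^ (p / 2) = a
  have h5 : ∑ x ∈ S, 2 * t ≤ ∑ x ∈ S, (f ^ (2 * t) * Q).roots.count x := by
    refine Finset.sum_le_sum fun x hx => ?_
    rw [count_roots]
    exact hmult x (Finset.mem_filter.1 hx).2
  rw [Finset.sum_const, smul_eq_mul, mul_comm] at h5
  refine h5.trans ?_
  refine (Finset.sum_le_sum_of_subset (Finset.subset_univ S)).trans ?_
  exact (Multiset.sum_count_eq_card fun a _ => Finset.mem_univ a).le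


lemma charsum (m : ℕ) (ε : ℝ) (hε : 0 < ε) : ∀ᶠ p : ℕ in atTop, ∀ _ : Fact p.Prime, p ≠ 2 →
    ∀ (f : (ZMod p)[X]) (α : ZMod p), f.natDegree = m → f.eval 0 ≠ 0 → f.rootMultiplicity α = 1 →
    |∑ x : ZMod p, (quadraticChar (ZMod p) (f.eval x) : ℝ)| ≤ ε * p := by
  obtain ⟨t, ht0, ht⟩ : ∃ t : ℕ, 0 < t ∧ 2 * ((m : ℝ) + 1) ≤ ε * t := by
    obtain ⟨t, ht⟩ := exists_nat_ge (2 * ((m : ℝ) + 1) / ε)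
    refine ⟨t, ?_, ?_⟩
    · have : 0 < 2 * ((m : ℝ) + 1) / ε := by positivity
      exact_mod_cast this.trans_le ht
    · rw [div_le_iff₀ hε] at ht; linarith
  obtain ⟨P, hP⟩ := exists_nat_ge (6 * (m : ℝ) / ε)
  filter_upwards [eventually_ge_atTop P,
    eventually_ge_atTop (m + 2 * (t * (2 * t * m + t + 1)) + 4)] with p hp1 hp2 hpf hp f α hm hf0 hα
  have hfne : f ≠ 0 := by rintro rfl; simp at hf0
  have hp1' : 6 * (m : ℝ) ≤ ε * p := by
    have : 6 * (m : ℝ) / ε ≤ p := hP.trans (by exact_mod_cast hp1)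
    rw [div_le_iff₀ hε] at this; linarith
  have hc := fun a => count hp f hf0 α hα t ((p - m) / 2) ht0 (by omega) (by rw [hm]; omega) a
  rw [hm] at hc
  have hring : ringChar (ZMod p) ≠ 2 := by rwa [ZMod.ringChar_zmod_n]
  have hχ : ∀ a : ZMod p, ((quadraticChar (ZMod p) a : ℤ) : ZMod p) = a ^ (p / 2) := by
    intro a
    have := quadraticChar_eq_pow_of_char_ne_two' hring a
    rwa [ZMod.card] at this
  have hz : (Finset.univ.filter fun x : ZMod p => f.eval x = 0).card ≤ m := by
    classical
    rw [← hm]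
    refine le_trans ?_ (card_roots' f)
    refine le_trans (Finset.card_le_card ?_) (Multiset.toFinset_card_le f.roots)
    intro x hx
    simp only [Finset.mem_filter, Finset.mem_univ, true_and] at hx
    simp [hfne, hx]
  have key : ∀ e : ℤ, e = 1 ∨ e = -1 →
      (e : ℝ) * ∑ x : ZMod p, (quadraticChar (ZMod p) (f.eval x) : ℝ) ≤ ε * p := by
    intro e he
    have hpt : ∀ x : ZMod p, (e : ℝ) * (quadraticChar (ZMod p) (f.eval x) : ℝ) ≤
        2 * (if f.eval x ^ (p / 2) = (e : ZMod p) then 1 else 0) - 1 +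
          (if f.eval x = 0 then 1 else 0) := by
      intro x
      by_cases h0 : f.eval x = 0
      · rw [h0]
        simp only [MulChar.map_zero, if_true]
        split_ifs <;> norm_num
      · rw [← hχ]
        rcases quadraticChar_dichotomy h0 with h | h <;> rcases he with rfl | rfl <;>
          simp [h, h0] <;> (try split_ifs) <;> norm_num
    have hs := Finset.sum_le_sum fun x (_ : x ∈ Finset.univ) => hpt x
    rw [← Finset.mul_sum, Finset.sum_add_distrib, Finset.sum_sub_distrib, ← Finset.mul_sum,
      Finset.sum_boole, Finset.sum_boole] at hs
    simp only [Finset.sum_const, Finset.card_univ, ZMod.card, nsmul_eq_mul, mul_one] at hs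
    have h1 : (2 * t * (Finset.univ.filter fun x : ZMod p => f.eval x ^ (p / 2) = (e : ZMod p)).card
      : ℝ) ≤ 2 * t * m + p + m * p + t * p := by exact_mod_cast hc e
    have h2 : ((Finset.univ.filter fun x : ZMod p => f.eval x = 0).card : ℝ) ≤ m := by
      exact_mod_cast hz
    have ht' : (0 : ℝ) < t := by exact_mod_cast ht0
    have hp0 : (0 : ℝ) ≤ p := by positivity
    refine hs.trans ?_
    refine le_of_mul_le_mul_left ?_ ht'
    have h3 := mul_le_mul_of_nonneg_right ht hp0
    have h4 := mul_le_mul_of_nonneg_left hp1' ht'.le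
    have h5 := mul_le_mul_of_nonneg_left h2 ht'.le
    nlinarith
  rw [abs_le]
  have k1 := key 1 (Or.inl rfl)
  have k2 := key (-1) (Or.inr rfl)
  push_cast at k1 k2
  constructor <;> linarith

lemma natCast_ne_zero_of_lt {p k : ℕ} (h0 : 0 < k) (h : k < p) : (k : ZMod p) ≠ 0 := by
  rw [Ne, ZMod.natCast_eq_zero_iff]
  intro hd
  have := Nat.le_of_dvd h0 hd
  omega

lemma charsum_prod (L : ℕ) (ε : ℝ) (hε : 0 < ε) : ∀ᶠ p : ℕ in atTop, ∀ _ : Fact p.Prime, p ≠ 2 →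
    ∀ I ⊆ Finset.range L, I.Nonempty →
    |∑ x : ZMod p, ∏ i ∈ I, (quadraticChar (ZMod p) (x + (i + 1 : ℕ)) : ℝ)| ≤ ε * p := by
  have h1 : ∀ᶠ p : ℕ in atTop, ∀ m ∈ Finset.range (L + 1), ∀ _ : Fact p.Prime, p ≠ 2 →
    ∀ (f : (ZMod p)[X]) (α : ZMod p), f.natDegree = m → f.eval 0 ≠ 0 → f.rootMultiplicity α = 1 →
    |∑ x : ZMod p, (quadraticChar (ZMod p) (f.eval x) : ℝ)| ≤ ε * p :=
    (Filter.eventually_all_finset _).2 fun m _ => charsum m ε hε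
  filter_upwards [h1, eventually_gt_atTop L] with p hp hpL hpf hp2 I hI hne
  obtain ⟨i0, hi0⟩ := hne
  set f : (ZMod p)[X] := ∏ i ∈ I, (X + C ((i + 1 : ℕ) : ZMod p)) with hf
  have hlt : ∀ i ∈ I, i < L := fun i hi => Finset.mem_range.1 (hI hi)
  have hev : ∀ x, f.eval x = ∏ i ∈ I, (x + (i + 1 : ℕ)) := by
    intro x; simp [hf, eval_prod]
  have hcard : I.card ≤ L := by simpa using Finset.card_le_card hI
  have := hp I.card (by simp; omega) hpf hp2 f (-((i0 + 1 : ℕ) : ZMod p)) ?_ ?_ ?_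
  · simpa only [hev, map_prod, Int.cast_prod] using this
  · rw [hf, natDegree_prod _ _ fun i _ => X_add_C_ne_zero _]
    simp only [natDegree_X_add_C, Finset.sum_const, smul_eq_mul, mul_one]
  · rw [hev, Finset.prod_ne_zero_iff]
    intro i hi
    rw [zero_add]
    exact natCast_ne_zero_of_lt (by omega) (by have := hlt i hi; omega)
  · have hfne : f ≠ 0 := Finset.prod_ne_zero_iff.2 fun i _ => X_add_C_ne_zero _
    have e : f = (X - C (-((i0 + 1 : ℕ) : ZMod p))) * ∏ i ∈ I.erase i0,
        (X + C ((i + 1 : ℕ) : ZMod p)) := by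
      rw [hf, ← Finset.mul_prod_erase _ _ hi0, C_neg, sub_neg_eq_add]
    rw [e, rootMultiplicity_mul (e ▸ hfne), rootMultiplicity_X_sub_C_self,
      rootMultiplicity_eq_zero]
    rw [IsRoot.def, eval_prod, Finset.prod_eq_zero_iff]
    rintro ⟨i, hi, h⟩
    have hi' := Finset.mem_erase.1 hi
    simp only [eval_add, eval_X, eval_C] at h
    rw [neg_add_eq_zero, ZMod.natCast_eq_natCast_iff'] at h
    have a1 := hlt i hi'.2
    have a2 := hlt i0 hi0
    rw [Nat.mod_eq_of_lt (by omega), Nat.mod_eq_of_lt (by omega)] at h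
    exact hi'.1 (by omega)

/-- the weight -/
noncomputable def weight (p : ℕ) [Fact p.Prime] (L : ℕ) (a : ℕ → ℝ) (x : ZMod p) : ℝ :=
  ∏ l ∈ Finset.range L,
    ((quadraticChar (ZMod p) (x + (l + 1 : ℕ)) : ℝ) * Real.sinh (a l) + Real.cosh (a l))

lemma abs_sinh_le (a : ℝ) : |Real.sinh a| ≤ Real.cosh a := by
  rw [Real.abs_sinh, ← Real.cosh_abs]
  exact (Real.sinh_lt_cosh _).le

lemma exp_le_weight (p : ℕ) [Fact p.Prime] (L : ℕ) (a : ℕ → ℝ) (x : ZMod p) :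
    Real.exp (∑ l ∈ Finset.range L, (quadraticChar (ZMod p) (x + (l + 1 : ℕ)) : ℝ) * a l)
      ≤ weight p L a x := by
  rw [Real.exp_sum, weight]
  refine Finset.prod_le_prod (fun _ _ => (Real.exp_pos _).le) fun l _ => ?_
  by_cases h : x + ((l + 1 : ℕ) : ZMod p) = 0
  · rw [h, MulChar.map_zero]; simp [Real.one_le_cosh]
  · rcases quadraticChar_dichotomy h with h | h <;> rw [h]
    · simp [Real.sinh_add_cosh]
    · have := Real.cosh_sub_sinh (a l)
      push_cast
      rw [neg_one_mul, neg_one_mul, ← this]; linarith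

lemma weight_nonneg (p : ℕ) [Fact p.Prime] (L : ℕ) (a : ℕ → ℝ) (x : ZMod p) :
    0 ≤ weight p L a x := (Real.exp_pos _).le.trans (exp_le_weight p L a x)

lemma sum_weight (L : ℕ) (a : ℕ → ℝ) : ∀ᶠ p : ℕ in atTop, ∀ _ : Fact p.Prime, p ≠ 2 →
    ∑ x : ZMod p, weight p L a x ≤ 2 * p * ∏ l ∈ Finset.range L, Real.cosh (a l) := by
  filter_upwards [charsum_prod L ((2 ^ L)⁻¹) (by positivity)] with p hp hpf hp2
  set K := ∏ l ∈ Finset.range L, Real.cosh (a l) with hK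
  have hK0 : 0 < K := Finset.prod_pos fun l _ => Real.cosh_pos _
  have hp0 : (0 : ℝ) ≤ p := by positivity
  simp only [weight, Finset.prod_add]
  rw [Finset.sum_comm]
  have hterm : ∀ I ∈ (Finset.range L).powerset,
      ∑ x : ZMod p, (∏ i ∈ I, (quadraticChar (ZMod p) (x + (i + 1 : ℕ)) : ℝ) * Real.sinh (a i)) *
        ∏ i ∈ Finset.range L \ I, Real.cosh (a i) ≤
      K * ((2 ^ L)⁻¹ * p) + if I = ∅ then K * p else 0 := by
    intro I hI
    have hI' := Finset.mem_powerset.1 hI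
    by_cases h0 : I = ∅
    · subst h0
      simp only [Finset.prod_empty, Finset.sdiff_empty, one_mul, Finset.sum_const, Finset.card_univ,
        ZMod.card, nsmul_eq_mul, if_true]
      have : 0 ≤ K * ((2 ^ L)⁻¹ * p) := by positivity
      rw [← hK]; linarith
    · rw [if_neg h0, add_zero]
      have h1 := hp hpf hp2 I hI' (Finset.nonempty_iff_ne_empty.2 h0)
      simp only [Finset.prod_mul_distrib, mul_assoc]
      rw [← Finset.sum_mul]
      refine (le_abs_self _).trans ?_
      rw [abs_mul, mul_comm]
      refine mul_le_mul ?_ h1 (abs_nonneg _) hK0.le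
      rw [abs_mul, Finset.abs_prod, Finset.abs_prod, hK, ← Finset.prod_sdiff hI', mul_comm]
      refine mul_le_mul ?_ ?_ ?_ ?_
      · refine Finset.prod_le_prod (fun _ _ => abs_nonneg _) fun i _ => ?_
        rw [abs_of_pos (Real.cosh_pos _)]
      · exact Finset.prod_le_prod (fun _ _ => abs_nonneg _) fun i _ => abs_sinh_le _
      · exact Finset.prod_nonneg fun _ _ => abs_nonneg _
      · exact Finset.prod_nonneg fun _ _ => (Real.cosh_pos _).le
  refine (Finset.sum_le_sum hterm).trans ?_
  rw [Finset.sum_add_distrib, Finset.sum_const, Finset.card_powerset, Finset.card_range,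
    Finset.sum_ite_eq' , if_pos (Finset.empty_mem_powerset _), nsmul_eq_mul]
  push_cast
  have : (2 : ℝ) ^ L * (K * ((2 ^ L)⁻¹ * p)) = K * p := by
    field_simp
  rw [this]; linarith

lemma shift_sum (g : ℕ → ℝ) (B : ℝ) (hB : ∀ n, |g n| ≤ B) (p k : ℕ) :
    ∑ n ∈ Finset.range p, g n ≤ ∑ n ∈ Finset.range p, g (n + k) + 2 * k * B := by
  induction k with
  | zero => simp
  | succ k ih =>
    have h1 := Finset.sum_range_succ (fun n => g (n + k)) p
    have h2 := Finset.sum_range_succ' (fun n => g (n + k)) p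
    have h3 : ∀ n, g (n + 1 + k) = g (n + (k + 1)) := fun n => by congr 1; ring
    simp only [h3, zero_add] at h2
    have b1 := abs_le.1 (hB k)
    have b2 := abs_le.1 (hB (p + k))
    push_cast
    nlinarith

lemma sum_range_eq (p : ℕ) [Fact p.Prime] (g : ZMod p → ℝ) :
    ∑ n ∈ Finset.range p, g n = ∑ x : ZMod p, g x := by
  refine Finset.sum_bij' (fun n _ => (n : ZMod p)) (fun x _ => x.val) ?_ ?_ ?_ ?_ ?_
  · intros; simp
  · intro x _; simpa using ZMod.val_lt x
  · intro n hn; exact ZMod.val_cast_of_lt (Finset.mem_range.1 hn)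
  · intro x _; simp
  · intros; rfl


lemma entropy_cover (X : Type) [MetricSpace X] [CompactSpace X] (f : X → X)
    (hent : Dynamics.coverEntropy f Set.univ = 0) (U : SetRel X X) (hU : U ∈ uniformity X)
    (c : ℝ) (hc : 0 < c) : ∀ᶠ n : ℕ in atTop, ∃ s : Finset X,
      Dynamics.IsDynCoverOf f Set.univ U n s ∧ (s.card : ℝ) ≤ Real.exp (c * n) := by
  have h1 : Dynamics.coverEntropyEntourage f Set.univ U < (c : EReal) := by
    refine (Dynamics.coverEntropyEntourage_le_coverEntropy f Set.univ hU).trans_lt ?_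
    rw [hent]; exact_mod_cast hc
  filter_upwards [ExpGrowth.eventually_le_exp h1] with n hn
  have e1 : EReal.exp ((c : EReal) * n) = ENNReal.ofReal (Real.exp (c * n)) := by
    rw [← EReal.exp_coe]; push_cast; rfl
  rw [e1] at hn
  have hfin : Dynamics.coverMincard f Set.univ U n < ⊤ := by
    by_contra h
    rw [not_lt, top_le_iff] at h
    rw [h] at hn
    simp at hn
  obtain ⟨s, hs, hcard⟩ := (Dynamics.coverMincard_finite_iff f Set.univ U n).1 hfin
  refine ⟨s, hs, ?_⟩
  rw [← hcard] at hn
  have h2 : ((s.card : ℕ) : ENNReal) ≤ ENNReal.ofReal (Real.exp (c * n)) := by simpa using hn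
  rw [← ENNReal.ofReal_natCast, ENNReal.ofReal_le_ofReal_iff (Real.exp_pos _).le] at h2
  exact h2

lemma abs_qchar_le (p : ℕ) [Fact p.Prime] (x : ZMod p) : |(quadraticChar (ZMod p) x : ℝ)| ≤ 1 := by
  by_cases h : x = 0
  · simp [h]
  · rcases quadraticChar_dichotomy h with h | h <;> simp [h]

lemma real_bound (X : Type) [MetricSpace X] [CompactSpace X] (f : X → X)
    (hent : Dynamics.coverEntropy f Set.univ = 0) (φ : X → ℝ) (hφ : Continuous φ) (x : X)
    (ε : ℝ) (hε : 0 < ε) : ∀ᶠ p : ℕ in atTop, ∀ _ : Fact p.Prime, p ≠ 2 →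
      ∑ n ∈ Finset.range p, (quadraticChar (ZMod p) (n : ZMod p) : ℝ) * φ (f^[n] x) ≤ ε * p := by
  obtain ⟨B, hB0, hB⟩ : ∃ B : ℝ, 0 < B ∧ ∀ y, |φ y| ≤ B := by
    obtain ⟨B, hB⟩ := isCompact_univ.exists_bound_of_continuousOn hφ.continuousOn
    exact ⟨max B 1, by positivity, fun y => (hB y (Set.mem_univ _)).trans (le_max_left _ _)⟩
  set lam : ℝ := ε / (4 * B ^ 2) with hlam
  have hl0 : 0 < lam := by positivity
  have hlB : lam * B ^ 2 / 2 = ε / 8 := by rw [hlam]; field_simp; norm_num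
  have hU : {q : X × X | dist (φ q.1) (φ q.2) < ε / 8} ∈ uniformity X :=
    (CompactSpace.uniformContinuous_of_continuous hφ) (Metric.dist_mem_uniformity (by positivity))
  obtain ⟨L, ⟨s, hs, hcard⟩, hL, hL0⟩ := ((entropy_cover X f hent _ hU (lam * (ε / 8))
    (by positivity)).and ((eventually_ge_atTop (⌈Real.log 2 / (lam * (ε / 8))⌉₊)).and
      (eventually_gt_atTop 0))).exists
  have hL2 : Real.log 2 ≤ L * (lam * (ε / 8)) := by
    rw [← div_le_iff₀ (by positivity)]
    exact (Nat.le_ceil _).trans (by exact_mod_cast hL)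
  have hLpos : (0 : ℝ) < L := by exact_mod_cast hL0
  have hsne : s.Nonempty := by
    obtain ⟨y, hy, _⟩ := hs (Set.mem_univ x)
    exact ⟨y, hy⟩
  have hN0 : (0 : ℝ) < s.card := by exact_mod_cast hsne.card_pos
  set M : ℝ := 2 * s.card * Real.exp (L * (lam ^ 2 * B ^ 2 / 2)) with hM
  have hM0 : 0 < M := by positivity
  have hlogM : Real.log M ≤ lam * L * (3 * ε / 8) := by
    rw [hM, Real.log_mul (by positivity) (by positivity), Real.log_mul (by positivity) (by positivity),
      Real.log_exp]
    have h1 : Real.log s.card ≤ lam * (ε / 8) * L := by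
      rw [Real.log_le_iff_le_exp hN0]; exact hcard
    have h2 : (L : ℝ) * (lam ^ 2 * B ^ 2 / 2) = L * lam * (ε / 8) := by rw [← hlB]; ring
    rw [h2]; linarith
  have hW : ∀ᶠ p : ℕ in atTop, ∀ y ∈ s, ∀ _ : Fact p.Prime, p ≠ 2 →
      ∑ z : ZMod p, weight p L (fun l => lam * φ (f^[l] y)) z ≤
        2 * p * ∏ l ∈ Finset.range L, Real.cosh (lam * φ (f^[l] y)) :=
    (Filter.eventually_all_finset _).2 fun y _ => sum_weight L _
  filter_upwards [hW, eventually_ge_atTop ⌈4 * L * B / ε⌉₊] with p hp hpL hpf hp2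
  have hp0 : (0 : ℝ) ≤ p := by positivity
  have hpL' : 4 * L * B ≤ ε * p := by
    have : 4 * L * B / ε ≤ p := (Nat.le_ceil _).trans (by exact_mod_cast hpL)
    rw [div_le_iff₀ hε] at this; linarith
  have hcosh : ∀ y, ∏ l ∈ Finset.range L, Real.cosh (lam * φ (f^[l] y)) ≤
      Real.exp (L * (lam ^ 2 * B ^ 2 / 2)) := by
    intro y
    have : Real.exp (L * (lam ^ 2 * B ^ 2 / 2)) =
        ∏ l ∈ Finset.range L, Real.exp (lam ^ 2 * B ^ 2 / 2) := by
      rw [Finset.prod_const, Finset.card_range, ← Real.exp_nat_mul]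
    rw [this]
    refine Finset.prod_le_prod (fun _ _ => (Real.cosh_pos _).le) fun l _ => ?_
    refine (Real.cosh_le_exp_half_sq _).trans (Real.exp_le_exp.2 ?_)
    have : φ (f^[l] y) ^ 2 ≤ B ^ 2 := sq_le_sq' (abs_le.1 (hB _)).1 (abs_le.1 (hB _)).2
    rw [mul_pow]
    gcongr
  have hWsum : ∑ n ∈ Finset.range p, ∑ y ∈ s, weight p L (fun l => lam * φ (f^[l] y)) (n : ZMod p)
      ≤ p * M := by
    rw [sum_range_eq p (fun z => ∑ y ∈ s, weight p L (fun l => lam * φ (f^[l] y)) z),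
      Finset.sum_comm]
    have : ∀ y ∈ s, ∑ z : ZMod p, weight p L (fun l => lam * φ (f^[l] y)) z ≤
        2 * p * Real.exp (L * (lam ^ 2 * B ^ 2 / 2)) := fun y hy =>
      (hp y hy hpf hp2).trans (mul_le_mul_of_nonneg_left (hcosh y) (by positivity))
    refine (Finset.sum_le_sum this).trans ?_
    rw [Finset.sum_const, nsmul_eq_mul, hM]
    apply le_of_eq; ring
  set g : ℕ → ℝ := fun n => (quadraticChar (ZMod p) (n : ZMod p) : ℝ) * φ (f^[n] x) with hg
  have hgB : ∀ n, |g n| ≤ B := by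
    intro n
    rw [hg]
    simp only [abs_mul]
    calc _ ≤ 1 * B := mul_le_mul (abs_qchar_le _ _) (hB _) (abs_nonneg _) zero_le_one
      _ = B := one_mul _
  have hpt : ∀ n : ℕ, lam * ∑ l ∈ Finset.range L, g (n + (l + 1)) ≤ lam * L * (ε / 8) +
      (Real.log M + (∑ y ∈ s, weight p L (fun l => lam * φ (f^[l] y)) (n : ZMod p)) / M - 1) := by
    intro n
    obtain ⟨y, hy, hyU⟩ := hs (Set.mem_univ (f^[n + 1] x))
    have hyU' := Dynamics.mem_dynEntourage.1 hyU
    set v := ∑ l ∈ Finset.range L,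
      (quadraticChar (ZMod p) ((n : ZMod p) + (l + 1 : ℕ)) : ℝ) * (lam * φ (f^[l] y)) with hv
    have h1 : lam * ∑ l ∈ Finset.range L, g (n + (l + 1)) ≤ lam * L * (ε / 8) + v := by
      have : lam * L * (ε / 8) = ∑ l ∈ Finset.range L, lam * (ε / 8) := by
        rw [Finset.sum_const, Finset.card_range, nsmul_eq_mul]; ring
      rw [this, hv, ← Finset.sum_add_distrib, Finset.mul_sum]
      refine Finset.sum_le_sum fun l hl => ?_
      have h2 : dist (φ (f^[l] (f^[n + 1] x))) (φ (f^[l] y)) < ε / 8 :=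
        hyU' l (Finset.mem_range.1 hl)
      rw [← Function.iterate_add_apply, Real.dist_eq] at h2
      have e : l + (n + 1) = n + (l + 1) := by ring
      rw [e] at h2
      simp only [hg]
      rw [Nat.cast_add n]
      set q : ℝ := (quadraticChar (ZMod p) ((n : ZMod p) + (l + 1 : ℕ)) : ℝ)
      have hq : |q| ≤ 1 := abs_qchar_le _ _
      have h3 : q * (φ (f^[n + (l + 1)] x) - φ (f^[l] y)) ≤ ε / 8 := by
        refine (le_abs_self _).trans ?_
        rw [abs_mul]
        calc _ ≤ 1 * (ε / 8) := mul_le_mul hq h2.le (abs_nonneg _) zero_le_one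
          _ = ε / 8 := one_mul _
      nlinarith
    have h2 : Real.exp v ≤ ∑ y ∈ s, weight p L (fun l => lam * φ (f^[l] y)) (n : ZMod p) := by
      refine (exp_le_weight p L (fun l => lam * φ (f^[l] y)) (n : ZMod p)).trans ?_
      exact Finset.single_le_sum
        (f := fun y => weight p L (fun l => lam * φ (f^[l] y)) (n : ZMod p))
        (fun y _ => weight_nonneg _ _ _ _) hy
    have h3 := Real.add_one_le_exp (v - Real.log M)
    rw [Real.exp_sub, Real.exp_log hM0] at h3
    have h4 := div_le_div_of_nonneg_right h2 hM0.le
    linarith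
  have hsum := Finset.sum_le_sum fun n (_ : n ∈ Finset.range p) => hpt n
  have hsum2 : ∑ n ∈ Finset.range p, lam * ∑ l ∈ Finset.range L, g (n + (l + 1)) ≤
      lam * (L * (p * (ε / 2))) := by
    refine hsum.trans ?_
    rw [Finset.sum_add_distrib, Finset.sum_sub_distrib, Finset.sum_add_distrib, ← Finset.sum_div]
    simp only [Finset.sum_const, Finset.card_range, nsmul_eq_mul, mul_one]
    have : (∑ n ∈ Finset.range p, ∑ y ∈ s, weight p L (fun l => lam * φ (f^[l] y)) (n : ZMod p)) / M
        ≤ p := by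
      rw [div_le_iff₀ hM0]; exact hWsum
    have h2 := mul_le_mul_of_nonneg_left hlogM hp0
    nlinarith
  rw [← Finset.mul_sum] at hsum2
  have hsum3 := le_of_mul_le_mul_left hsum2 hl0
  rw [Finset.sum_comm] at hsum3
  have hshift : ∑ l ∈ Finset.range L, ∑ n ∈ Finset.range p, g n ≤
      ∑ l ∈ Finset.range L, (∑ n ∈ Finset.range p, g (n + (l + 1)) + 2 * L * B) := by
    refine Finset.sum_le_sum fun l hl => ?_
    refine (shift_sum g B hgB p (l + 1)).trans ?_
    have : ((l + 1 : ℕ) : ℝ) ≤ L := by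
      exact_mod_cast Finset.mem_range.1 hl
    gcongr
  rw [Finset.sum_add_distrib] at hshift
  simp only [Finset.sum_const, Finset.card_range, nsmul_eq_mul] at hshift
  refine le_of_mul_le_mul_left ?_ hLpos
  have h9 := mul_le_mul_of_nonneg_left hpL' hLpos.le
  nlinarith

lemma legendre_eq (p : ℕ) [Fact p.Prime] (n : ℕ) :
    legendre p n = quadraticChar (ZMod p) (n : ZMod p) := by
  classical
  rw [legendre, quadraticChar_apply, quadraticCharFun]
  congr

end Stepanov

/-- For a compact metric space `X` and a continuous map `f : X → X` of zero topological
entropy, for every continuous `φ : X → ℂ` and every `x ∈ X`, the averages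
`(1/p) ∑_{0 ≤ n < p} (n/p) φ(fⁿ(x))` converge to `0` as `p → ∞` over the odd primes. -/
theorem legendre_sarnak
    (X : Type) [MetricSpace X] [CompactSpace X] (f : X → X) (hf : Continuous f)
    (hent : Dynamics.coverEntropy f Set.univ = 0)
    (φ : X → ℂ) (hφ : Continuous φ) (x : X) :
    Tendsto (fun p : ℕ => (p : ℂ)⁻¹ * ∑ n ∈ Finset.range p, (legendre p n : ℂ) * φ (f^[n] x))
      (atTop ⊓ 𝓟 {p : ℕ | p.Prime ∧ p ≠ 2}) (nhds 0) := by
  have hmain : ∀ ψ : X → ℝ, Continuous ψ → ∀ ε : ℝ, 0 < ε → ∀ᶠ p : ℕ in atTop,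
      p.Prime → p ≠ 2 → |∑ n ∈ Finset.range p, (legendre p n : ℝ) * ψ (f^[n] x)| ≤ ε * p := by
    intro ψ hψ ε hε
    filter_upwards [Stepanov.real_bound X f hent ψ hψ x ε hε,
      Stepanov.real_bound X f hent (fun y => - ψ y) hψ.neg x ε hε] with p h1 h2 hp hp2
    have hpf : Fact p.Prime := ⟨hp⟩
    have h1 := h1 hpf hp2
    have h2 := h2 hpf hp2
    simp only [mul_neg, Finset.sum_neg_distrib] at h2
    simp only [Stepanov.legendre_eq]
    rw [abs_le]
    constructor <;> linarith
  rw [Metric.tendsto_nhds]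
  intro ε hε
  rw [eventually_inf_principal]
  filter_upwards [hmain (fun y => (φ y).re) (Complex.continuous_re.comp hφ) (ε / 4) (by positivity),
    hmain (fun y => (φ y).im) (Complex.continuous_im.comp hφ) (ε / 4) (by positivity)]
    with p h1 h2 hp
  have h1 := h1 hp.1 hp.2
  have h2 := h2 hp.1 hp.2
  have hp0 : (0 : ℝ) < p := by exact_mod_cast hp.1.pos
  rw [dist_zero_right, norm_mul, norm_inv, Complex.norm_natCast]
  have h3 : ‖∑ n ∈ Finset.range p, (legendre p n : ℂ) * φ (f^[n] x)‖ ≤ ε / 2 * p := by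
    refine (Complex.norm_le_abs_re_add_abs_im _).trans ?_
    rw [Complex.re_sum, Complex.im_sum]
    have e1 : ∀ n, ((legendre p n : ℂ) * φ (f^[n] x)).re = (legendre p n : ℝ) * (φ (f^[n] x)).re := by
      intro n
      rw [← Complex.ofReal_intCast, Complex.re_ofReal_mul]
    have e2 : ∀ n, ((legendre p n : ℂ) * φ (f^[n] x)).im = (legendre p n : ℝ) * (φ (f^[n] x)).im := by
      intro n
      rw [← Complex.ofReal_intCast, Complex.im_ofReal_mul]
    simp only [e1, e2]
    linarith
  rw [inv_mul_lt_iff₀ hp0]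
  nlinarith
end

section
/- Fix an integer k ≥ 1. For Lebesgue-almost every x ∈ (0,1) and every sparse infinite set P of primes, the quantity (1/p)·#{ n : 1 ≤ n < p, (n/p) = 1, and aₙ(x) = k } converges, as p → ∞ along P, to (1/(2 log 2)) · log( (k+1)²/(k(k+2)) ). -/
open Filter MeasureTheory

/-- The Gauss map `G(x) = 1/x - ⌊1/x⌋`. -/
noncomputable def gaussMap (x : ℝ) : ℝ := Int.fract x⁻¹

/-- The `n`-th partial quotient `aₙ(x) = ⌊1/G^{n-1}(x)⌋` of the continued fraction
expansion of `x`, for `n ≥ 1`. -/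
noncomputable def partialQuotient (n : ℕ) (x : ℝ) : ℤ := ⌊(gaussMap^[n - 1] x)⁻¹⌋


/-- branch weights -/
noncomputable def ps (k : ℕ) (y : ℝ) : ℝ := (1 + y) / ((k + 1 + y) * (k + 2 + y))
/-- inverse branches -/
noncomputable def br (k : ℕ) (y : ℝ) : ℝ := (k + 1 + y)⁻¹

lemma ps_nonneg (k : ℕ) {y : ℝ} (hy : 0 ≤ y) : 0 ≤ ps k y := by
  unfold ps; positivity

lemma hasSum_ps {y : ℝ} (hy : 0 ≤ y) : HasSum (fun k => ps k y) 1 := by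
  rw [hasSum_iff_tendsto_nat_of_nonneg (fun k => ps_nonneg k hy)]
  have h : ∀ n : ℕ, ∑ k ∈ Finset.range n, ps k y = 1 - (1 + y) / (n + 1 + y) := by
    intro n
    induction n with
    | zero => simp; field_simp; ring
    | succ n ih =>
      rw [Finset.sum_range_succ, ih]
      unfold ps
      push_cast
      field_simp
      ring
  simp_rw [h]
  have : Tendsto (fun n : ℕ => (1 + y) / ((n : ℝ) + 1 + y)) atTop (nhds 0) := by
    apply Tendsto.div_atTop tendsto_const_nhds
    apply tendsto_atTop_add_const_right
    apply tendsto_atTop_add_const_right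
    exact tendsto_natCast_atTop_atTop
  simpa using tendsto_const_nhds.sub this

lemma ps_lip (k : ℕ) (hk : 1 ≤ k) {x y : ℝ} (hx : x ∈ Set.Ioo (0:ℝ) 1) (hy : y ∈ Set.Ioo (0:ℝ) 1) :
    |ps k x - ps k y| ≤ |x - y| * (ps k 1 / 2) := by
  obtain ⟨hx0, hx1⟩ := hx
  obtain ⟨hy0, hy1⟩ := hy
  have hk' : (1:ℝ) ≤ k := by exact_mod_cast hk
  set K : ℝ := (k : ℝ) with hK
  have e : ps k x - ps k y = (x - y) * ((K * (2*K+3 + x + y) - (K+1+x) * (K+1+y)) /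
      ((K+1+x) * (K+2+x) * ((K+1+y) * (K+2+y)))) := by
    unfold ps
    rw [← hK]
    field_simp
    ring
  rw [e, abs_mul]
  apply mul_le_mul_of_nonneg_left _ (abs_nonneg _)
  have e2 : ps k 1 / 2 = 1 / ((K+2)*(K+3)) := by
    unfold ps
    rw [← hK]
    field_simp
    ring
  have hxy : 0 < x * y := by positivity
  have hxy1 : x * y < 1 := by nlinarith
  rw [e2, abs_div, abs_of_pos (show 0 < (K+1+x) * (K+2+x) * ((K+1+y) * (K+2+y)) by positivity)]
  have hnum : |K * (2*K+3 + x + y) - (K+1+x) * (K+1+y)| ≤ K^2 + K := by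
    rw [abs_le]; constructor <;> nlinarith
  have hden : ((K+1)*(K+2))^2 ≤ (K+1+x) * (K+2+x) * ((K+1+y) * (K+2+y)) := by
    have a1 : (K+1)*(K+2) ≤ (K+1+x) * (K+2+x) := by nlinarith
    have a2 : (K+1)*(K+2) ≤ (K+1+y) * (K+2+y) := by nlinarith
    rw [sq]
    exact mul_le_mul a1 a2 (by positivity) (by positivity)
  calc _ ≤ (K^2+K) / ((K+1)*(K+2))^2 := by gcongr
    _ ≤ _ := by
      rw [div_le_div_iff₀ (by positivity) (by positivity)]
      have : (K^2+K) * ((K+2)*(K+3)) = ((K+1)*(K+2)) * (K*(K+3)) := by ring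
      rw [this, one_mul, sq]
      apply mul_le_mul_of_nonneg_left _ (by positivity)
      nlinarith

lemma br_mem (k : ℕ) {y : ℝ} (hy : y ∈ Set.Ioo (0:ℝ) 1) : br k y ∈ Set.Ioo (0:ℝ) 1 := by
  obtain ⟨h0, h1⟩ := hy
  unfold br
  have : (0:ℝ) ≤ k := by positivity
  exact ⟨by positivity, inv_lt_one_of_one_lt₀ (by linarith)⟩

lemma br_sub (k : ℕ) {x y : ℝ} (hx : x ∈ Set.Ioo (0:ℝ) 1) (hy : y ∈ Set.Ioo (0:ℝ) 1) :
    |br k x - br k y| = |x - y| / ((k+1+x)*(k+1+y)) := by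
  obtain ⟨hx0, hx1⟩ := hx
  obtain ⟨hy0, hy1⟩ := hy
  have : br k x - br k y = (y - x) / ((k+1+x)*(k+1+y)) := by
    unfold br
    field_simp
    ring
  rw [this, abs_div, abs_sub_comm, abs_of_pos (show (0:ℝ) < (k+1+x)*(k+1+y) by positivity)]

open Classical in
/-- The transfer operator of the Gauss map (w.r.t. Gauss measure). -/
noncomputable def LL (f : ℝ → ℝ) (y : ℝ) : ℝ :=
  if y ∈ Set.Ioo (0:ℝ) 1 then ∑' k, ps k y * f (br k y) else 0

lemma LL_summable {f : ℝ → ℝ} {B : ℝ} (hB : ∀ x ∈ Set.Ioo (0:ℝ) 1, |f x| ≤ B) {x y : ℝ}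
    (hx : x ∈ Set.Ioo (0:ℝ) 1)
    (hy : y ∈ Set.Ioo (0:ℝ) 1) : Summable fun k => ps k x * f (br k y) := by
  apply Summable.of_norm_bounded ((hasSum_ps hx.1.le).summable.mul_right B)
  intro k
  rw [norm_mul, Real.norm_eq_abs, Real.norm_eq_abs, abs_of_nonneg (ps_nonneg k hx.1.le)]
  exact mul_le_mul_of_nonneg_left (hB _ (br_mem k hy)) (ps_nonneg k hx.1.le)

lemma LL_hasSum {f : ℝ → ℝ} {B : ℝ} (hB : ∀ x ∈ Set.Ioo (0:ℝ) 1, |f x| ≤ B) {y : ℝ}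
    (hy : y ∈ Set.Ioo (0:ℝ) 1) : HasSum (fun k => ps k y * f (br k y)) (LL f y) := by
  rw [LL, if_pos hy]
  exact (LL_summable hB hy hy).hasSum

lemma LL_lip {f : ℝ → ℝ} {B K : ℝ} (hB : ∀ x ∈ Set.Ioo (0:ℝ) 1, |f x| ≤ B) (hK : 0 ≤ K)
    (hf : ∀ x ∈ Set.Ioo (0:ℝ) 1, ∀ y ∈ Set.Ioo (0:ℝ) 1, |f x - f y| ≤ K * |x - y|)
    {x y : ℝ} (hx : x ∈ Set.Ioo (0:ℝ) 1) (hy : y ∈ Set.Ioo (0:ℝ) 1) :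
    |LL f x - LL f y| ≤ 23 / 24 * K * |x - y| := by
  have h1 := LL_hasSum hB hx
  have h2 := LL_hasSum hB hy
  have h3 : HasSum (fun k => (ps k x - ps k y) * f (br 0 y)) 0 := by
    simpa using ((hasSum_ps hx.1.le).sub (hasSum_ps hy.1.le)).mul_right (f (br 0 y))
  have h4 := (h1.sub h2).sub h3
  rw [sub_zero] at h4
  have hb : HasSum (fun k => K * |x - y| * (ps k x * (1/4) + ps k 1 / 2 +
      (if k = 0 then (5/24:ℝ) else 0))) (K * |x - y| * (1 * (1/4) + 1/2 + 5/24)) := by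
    apply HasSum.mul_left
    apply HasSum.add
    · exact ((hasSum_ps hx.1.le).mul_right _).add ((hasSum_ps zero_le_one).div_const 2)
    · exact hasSum_ite_eq 0 _
  have key := tsum_of_norm_bounded hb (f := fun k => ps k x * f (br k x) - ps k y * f (br k y)
    - (ps k x - ps k y) * f (br 0 y)) ?_
  · rw [h4.tsum_eq, Real.norm_eq_abs] at key
    calc _ ≤ _ := key
      _ = _ := by ring
  · intro k
    have e : ps k x * f (br k x) - ps k y * f (br k y) - (ps k x - ps k y) * f (br 0 y)
      = ps k x * (f (br k x) - f (br k y)) + (ps k x - ps k y) * (f (br k y) - f (br 0 y)) := by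
      ring
    have hp := ps_nonneg k hx.1.le
    have hd : ps k x * |f (br k x) - f (br k y)| ≤
        ps k x * (K * (|x - y| / ((k+1+x)*(k+1+y)))) := by
      rw [← br_sub k hx hy]
      exact mul_le_mul_of_nonneg_left (hf _ (br_mem k hx) _ (br_mem k hy)) hp
    rw [e, Real.norm_eq_abs]
    have hxy : 0 ≤ K * |x - y| := by positivity
    obtain ⟨hx0, hx1⟩ := id hx
    obtain ⟨hy0, hy1⟩ := id hy
    rcases Nat.eq_zero_or_pos k with rfl | hk
    · rw [sub_self (f (br 0 y)), mul_zero, add_zero, abs_mul, abs_of_nonneg hp, if_pos rfl]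
      refine hd.trans ?_
      have : ps 0 x * (K * (|x - y| / (((0:ℕ):ℝ)+1+x) / (((0:ℕ):ℝ)+1+y))) =
        K * |x - y| * (ps 0 x / ((1+x)*(1+y))) := by push_cast; field_simp; ring
      rw [← div_div, this]
      apply mul_le_mul_of_nonneg_left _ hxy
      have e1 : ps 0 1 = 1/3 := by unfold ps; norm_num
      have e2 : ps 0 x = 1/(2+x) := by unfold ps; push_cast; field_simp; ring
      rw [e1, e2]
      have h5 : 1 / (2 + x) ≤ 1/2 := by
        rw [div_le_div_iff₀ (by positivity) (by positivity)]; linarith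
      have h6 : 1 / (2+x) / ((1+x)*(1+y)) ≤ 1/(2+x) := by
        apply div_le_self (by positivity)
        nlinarith
      linarith
    · rw [if_neg (by omega), add_zero]
      refine (abs_add_le _ _).trans ?_
      rw [abs_mul, abs_mul, abs_of_nonneg hp, mul_add]
      have hk' : (1:ℝ) ≤ k := by exact_mod_cast hk
      apply add_le_add
      · refine hd.trans ?_
        have : ps k x * (K * (|x - y| / ((k+1+x)*(k+1+y)))) =
          K * |x - y| * (ps k x * (1 / ((k+1+x)*(k+1+y)))) := by ring
        rw [this]
        apply mul_le_mul_of_nonneg_left _ hxy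
        apply mul_le_mul_of_nonneg_left _ hp
        rw [div_le_div_iff₀ (by positivity) (by positivity)]
        nlinarith
      · have h1 := ps_lip k hk hx hy
        have h2 : |f (br k y) - f (br 0 y)| ≤ K := by
          refine (hf _ (br_mem k hy) _ (br_mem 0 hy)).trans ?_
          have := br_mem k hy
          have h0 := br_mem 0 hy
          have : |br k y - br 0 y| ≤ 1 := by
            rw [abs_le]; constructor <;> linarith [this.1, this.2, h0.1, h0.2]
          nlinarith
        calc _ ≤ (|x - y| * (ps k 1 / 2)) * K := by
              have := ps_nonneg k (zero_le_one (α := ℝ))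
              gcongr
          _ = _ := by ring

lemma floor_br (k : ℕ) {y : ℝ} (hy : y ∈ Set.Ioo (0:ℝ) 1) : ⌊(br k y)⁻¹⌋ = (k : ℤ) + 1 := by
  obtain ⟨h0, h1⟩ := hy
  rw [br, inv_inv, Int.floor_eq_iff]
  push_cast
  constructor <;> linarith

lemma gaussMap_br (k : ℕ) {y : ℝ} (hy : y ∈ Set.Ioo (0:ℝ) 1) : gaussMap (br k y) = y := by
  have := floor_br k hy
  rw [gaussMap, Int.fract, this, br, inv_inv]
  push_cast; ring

lemma measurable_gaussMap : Measurable gaussMap := by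
  unfold gaussMap
  exact measurable_fract.comp measurable_inv

/-- unnormalised Gauss measure -/
noncomputable def gm : Measure ℝ :=
  (volume.restrict (Set.Ioo (0:ℝ) 1)).withDensity (fun x => ENNReal.ofReal (1 / (1 + x)))

lemma measurable_dens : Measurable (fun x : ℝ => ENNReal.ofReal (1 / (1 + x))) := by
  fun_prop

lemma gm_lintegral_eq {G : ℝ → ENNReal} (hG : Measurable G) :
    ∫⁻ x, G x ∂gm = ∫⁻ x in Set.Ioo (0:ℝ) 1, ENNReal.ofReal (1 / (1 + x)) * G x := by
  rw [gm, lintegral_withDensity_eq_lintegral_mul _ measurable_dens hG]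
  rfl

lemma br_injOn (k : ℕ) : Set.InjOn (br k) (Set.Ioo (0:ℝ) 1) := by
  intro x hx y hy h
  rw [← gaussMap_br k hx, ← gaussMap_br k hy, h]

lemma br_hasDeriv (k : ℕ) {y : ℝ} (hy : y ∈ Set.Ioo (0:ℝ) 1) :
    HasDerivAt (br k) (-1 / (k + 1 + y) ^ 2) y := by
  unfold br
  have h := hy.1
  exact ((hasDerivAt_id y).const_add ((k:ℝ) + 1)).inv (by simp only [id]; positivity)

lemma measurable_br (k : ℕ) : Measurable (br k) := by
  unfold br; fun_prop

lemma measurable_ps (k : ℕ) : Measurable (ps k) := by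
  unfold ps; fun_prop

lemma Ioo_ae_eq : (Set.Ioo (0:ℝ) 1) =ᵐ[volume] ⋃ k : ℕ, br k '' Set.Ioo (0:ℝ) 1 := by
  apply Filter.EventuallyLE.antisymm
  · have hc : (Set.range (fun n : ℤ => ((n : ℝ))⁻¹)).Countable := Set.countable_range _
    have := hc.ae_notMem volume
    filter_upwards [this] with x hx hxI
    obtain ⟨h0, h1⟩ := hxI
    have hinv : 1 < x⁻¹ := (one_lt_inv₀ h0).2 h1
    have hfl : 1 ≤ ⌊x⁻¹⌋ := by rw [Int.le_floor]; exact_mod_cast hinv.le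
    refine Set.mem_iUnion.2 ⟨(⌊x⁻¹⌋ - 1).toNat, Int.fract x⁻¹, ⟨?_, Int.fract_lt_one _⟩, ?_⟩
    · apply lt_of_le_of_ne (Int.fract_nonneg _)
      intro h
      apply hx
      refine ⟨⌊x⁻¹⌋, ?_⟩
      have := Int.floor_add_fract x⁻¹
      rw [← h, add_zero] at this
      simp only [this, inv_inv]
    · have e : (((⌊x⁻¹⌋ - 1).toNat : ℕ) : ℝ) = (⌊x⁻¹⌋ : ℝ) - 1 := by
        have : (((⌊x⁻¹⌋ - 1).toNat : ℕ) : ℤ) = ⌊x⁻¹⌋ - 1 := Int.toNat_of_nonneg (by omega)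
        exact_mod_cast congrArg (fun z : ℤ => (z : ℝ)) this
      rw [br, e]
      have := Int.floor_add_fract x⁻¹
      rw [sub_add_cancel, this, inv_inv]
  · apply Filter.Eventually.of_forall
    intro x hx
    obtain ⟨k, y, hy, rfl⟩ := Set.mem_iUnion.1 hx
    exact br_mem k hy

lemma gm_unfold {G : ℝ → ENNReal} (hG : Measurable G) :
    ∫⁻ x, G x ∂gm = ∫⁻ y, ∑' k, ENNReal.ofReal (ps k y) * G (br k y) ∂gm := by
  have hm : ∀ k, Measurable fun y => ENNReal.ofReal (ps k y) * G (br k y) := fun k =>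
    (measurable_ps k).ennreal_ofReal.mul (hG.comp (measurable_br k))
  rw [gm_lintegral_eq hG, gm_lintegral_eq (Measurable.tsum hm), setLIntegral_congr Ioo_ae_eq,
    lintegral_iUnion]
  · have : ∀ y, ENNReal.ofReal (1 / (1 + y)) * ∑' k, ENNReal.ofReal (ps k y) * G (br k y)
      = ∑' k, ENNReal.ofReal (1 / (1 + y)) * (ENNReal.ofReal (ps k y) * G (br k y)) := by
      intro y; rw [ENNReal.tsum_mul_left]
    simp_rw [this]
    have hm2 : ∀ k, Measurable fun y =>
        ENNReal.ofReal (1 / (1 + y)) * (ENNReal.ofReal (ps k y) * G (br k y)) :=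
      fun k => measurable_dens.mul (hm k)
    rw [lintegral_tsum (fun k => (hm2 k).aemeasurable)]
    congr 1
    ext k
    rw [lintegral_image_eq_lintegral_abs_deriv_mul measurableSet_Ioo
      (fun x hx => (br_hasDeriv k hx).hasDerivWithinAt) (br_injOn k)]
    apply setLIntegral_congr_fun measurableSet_Ioo
    intro y hy
    have h0 := hy.1
    have hb := (br_mem k hy).1
    simp only
    rw [← mul_assoc, ← mul_assoc, ← ENNReal.ofReal_mul (abs_nonneg _),
      ← ENNReal.ofReal_mul (by positivity)]
    congr 2
    rw [abs_div, abs_neg, abs_one, abs_of_pos (by positivity)]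
    unfold br ps
    field_simp
    ring
  · intro k
    exact measurableSet_Ioo.image_of_continuousOn_injOn
      (fun x hx => (br_hasDeriv k hx).continuousAt.continuousWithinAt) (br_injOn k)
  · intro i j hij
    apply Set.disjoint_left.2
    rintro _ ⟨x, hx, rfl⟩ ⟨y, hy, h⟩
    have h1 := floor_br i hx
    rw [← h, floor_br j hy] at h1
    omega

lemma gm_ac : gm ≪ volume.restrict (Set.Ioo (0:ℝ) 1) := withDensity_absolutelyContinuous _ _

lemma ac_gm : volume.restrict (Set.Ioo (0:ℝ) 1) ≪ gm := by
  apply withDensity_absolutelyContinuous' measurable_dens.aemeasurable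
  filter_upwards [ae_restrict_mem measurableSet_Ioo] with x hx
  have := hx.1
  rw [ENNReal.ofReal_ne_zero_iff]
  positivity

lemma gm_mem : ∀ᵐ x ∂gm, x ∈ Set.Ioo (0:ℝ) 1 := gm_ac.ae_le (ae_restrict_mem measurableSet_Ioo)

instance : IsFiniteMeasure gm := by
  constructor
  have h := gm_lintegral_eq (G := fun _ => 1) measurable_const
  rw [lintegral_one] at h
  rw [h]
  calc _ ≤ ∫⁻ x in Set.Ioo (0:ℝ) 1, 1 := by
        apply setLIntegral_mono measurable_const
        intro x hx
        have := hx.1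
        rw [mul_one, ← ENNReal.ofReal_one]
        apply ENNReal.ofReal_le_ofReal
        rw [div_le_one (by positivity)]
        linarith
    _ < ⊤ := by simp

lemma gm_pos : 0 < gm.real Set.univ := by
  rw [measureReal_def, ENNReal.toReal_pos_iff]
  refine ⟨?_, measure_lt_top _ _⟩
  rw [pos_iff_ne_zero]
  intro h
  have := ac_gm h
  simp at this

lemma LL_bound {f : ℝ → ℝ} {B : ℝ} (hB : ∀ x ∈ Set.Ioo (0:ℝ) 1, |f x| ≤ B) {y : ℝ}
    (hy : y ∈ Set.Ioo (0:ℝ) 1) : |LL f y| ≤ B := by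
  have h := (hasSum_ps hy.1.le).mul_right B
  rw [LL, if_pos hy]
  have := tsum_of_norm_bounded h (f := fun k => ps k y * f (br k y)) ?_
  · simpa using this
  · intro k
    rw [norm_mul, Real.norm_eq_abs, Real.norm_eq_abs, abs_of_nonneg (ps_nonneg k hy.1.le)]
    exact mul_le_mul_of_nonneg_left (hB _ (br_mem k hy)) (ps_nonneg k hy.1.le)

lemma LL_integral {f : ℝ → ℝ} {B : ℝ} (hB : ∀ x ∈ Set.Ioo (0:ℝ) 1, |f x| ≤ B)
    (hf : Measurable f) (hL : Measurable (LL f)) : ∫ x, LL f x ∂gm = ∫ x, f x ∂gm := by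
  have i1 : Integrable f gm := Integrable.of_bound hf.aestronglyMeasurable B
    (gm_mem.mono fun x hx => hB x hx)
  have i2 : Integrable (LL f) gm := Integrable.of_bound hL.aestronglyMeasurable B
    (gm_mem.mono fun x hx => LL_bound hB hx)
  have h : ∫ x, (LL f x + B) ∂gm = ∫ x, (f x + B) ∂gm := by
    rw [integral_eq_lintegral_of_nonneg_ae, integral_eq_lintegral_of_nonneg_ae]
    · congr 1
      rw [gm_unfold (G := fun x => ENNReal.ofReal (f x + B)) (by fun_prop)]
      apply lintegral_congr_ae
      filter_upwards [gm_mem] with y hy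
      have hs : HasSum (fun k => ps k y * (f (br k y) + B)) (LL f y + B) := by
        simpa [mul_add] using (LL_hasSum hB hy).add ((hasSum_ps hy.1.le).mul_right B)
      rw [← hs.tsum_eq, ENNReal.ofReal_tsum_of_nonneg _ hs.summable]
      · congr 1
        ext k
        rw [ENNReal.ofReal_mul (ps_nonneg k hy.1.le)]
      · intro k
        have := (abs_le.1 (hB _ (br_mem k hy))).1
        exact mul_nonneg (ps_nonneg k hy.1.le) (by linarith)
    · filter_upwards [gm_mem] with y hy
      have := (abs_le.1 (hB _ hy)).1
      simp only [Pi.zero_apply]; linarith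
    · exact (hf.add_const B).aestronglyMeasurable
    · filter_upwards [gm_mem] with y hy
      have := (abs_le.1 (LL_bound hB hy)).1
      simp only [Pi.zero_apply]; linarith
    · exact (hL.add_const B).aestronglyMeasurable
  rw [integral_add i1 (integrable_const _), integral_add i2 (integrable_const _)] at h
  linarith

lemma exp_le_add (s : ℝ) : Real.exp s ≤ s + Real.exp (s ^ 2) := by
  have h2 := Real.add_one_le_exp (s ^ 2)
  rcases le_or_gt |s| 1 with h | h
  · have := (abs_le.1 (Real.abs_exp_sub_one_sub_id_le h)).2
    linarith
  · rcases lt_abs.1 h with h | h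
    · have : Real.exp s ≤ Real.exp (s ^ 2) := Real.exp_le_exp.2 (by nlinarith)
      linarith
    · have : Real.exp s ≤ 1 := Real.exp_le_one_iff.2 (by linarith)
      nlinarith

lemma LL_exp {h : ℝ → ℝ} {C : ℝ} (hB : ∀ x ∈ Set.Ioo (0:ℝ) 1, |h x| ≤ C) (t : ℝ) {y : ℝ}
    (hy : y ∈ Set.Ioo (0:ℝ) 1) :
    ∑' k, ENNReal.ofReal (ps k y) * ENNReal.ofReal (Real.exp (t * (h (br k y) - LL h y))) ≤
      ENNReal.ofReal (Real.exp (4 * C ^ 2 * t ^ 2)) := by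
  have h0 : ∀ k, 0 ≤ ps k y := fun k => ps_nonneg k hy.1.le
  have hs : HasSum (fun k => ps k y * (t * (h (br k y) - LL h y)) +
      ps k y * Real.exp (4 * C ^ 2 * t ^ 2)) (Real.exp (4 * C ^ 2 * t ^ 2)) := by
    have := (((LL_hasSum hB hy).sub ((hasSum_ps hy.1.le).mul_right (LL h y))).mul_left t).add
      ((hasSum_ps hy.1.le).mul_right (Real.exp (4 * C ^ 2 * t ^ 2)))
    convert this using 1
    · rfl
    · funext k; ring
    · ring
  have hle : ∀ k, ps k y * Real.exp (t * (h (br k y) - LL h y)) ≤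
      ps k y * (t * (h (br k y) - LL h y)) + ps k y * Real.exp (4 * C ^ 2 * t ^ 2) := by
    intro k
    rw [← mul_add]
    apply mul_le_mul_of_nonneg_left _ (h0 k)
    refine (exp_le_add _).trans ?_
    gcongr
    have h1 := abs_le.1 (hB _ (br_mem k hy))
    have h2 := abs_le.1 (LL_bound hB hy)
    have h3 : (h (br k y) - LL h y) ^ 2 ≤ (2 * C) ^ 2 := by
      apply sq_le_sq'  <;> linarith
    rw [mul_pow]
    nlinarith [sq_nonneg t]
  have hpos : ∀ k, 0 ≤ ps k y * Real.exp (t * (h (br k y) - LL h y)) := fun k =>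
    mul_nonneg (h0 k) (Real.exp_pos _).le
  have hsm : Summable fun k => ps k y * Real.exp (t * (h (br k y) - LL h y)) :=
    Summable.of_nonneg_of_le hpos hle hs.summable
  calc _ = ∑' k, ENNReal.ofReal (ps k y * Real.exp (t * (h (br k y) - LL h y))) := by
        congr 1; ext k; rw [ENNReal.ofReal_mul (h0 k)]
    _ = ENNReal.ofReal (∑' k, ps k y * Real.exp (t * (h (br k y) - LL h y))) :=
        (ENNReal.ofReal_tsum_of_nonneg hpos hsm).symm
    _ ≤ _ := by
        apply ENNReal.ofReal_le_ofReal
        rw [← hs.tsum_eq]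
        exact hsm.tsum_le_tsum hle hs.summable

lemma exp_moment {h : ℕ → ℝ → ℝ} {C : ℝ} (hm : ∀ n, Measurable (h n))
    (hL : ∀ n, Measurable (LL (h n)))
    (hB : ∀ n, ∀ x ∈ Set.Ioo (0:ℝ) 1, |h n x| ≤ C) (t : ℝ) (N : ℕ) : ∀ j : ℕ,
    ∫⁻ x, ENNReal.ofReal (Real.exp (t * ∑ n ∈ Finset.range N,
      (h (j + n) (gaussMap^[n] x) - LL (h (j + n)) (gaussMap^[n + 1] x)))) ∂gm ≤
      ENNReal.ofReal (Real.exp (4 * C ^ 2 * t ^ 2)) ^ N * gm Set.univ := by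
  have hit : ∀ n, Measurable (gaussMap^[n]) := fun n => measurable_gaussMap.iterate n
  induction N with
  | zero => intro j; simp
  | succ N ih =>
    intro j
    have hmeas : ∀ N j, Measurable fun x => ENNReal.ofReal (Real.exp (t * ∑ n ∈ Finset.range N,
      (h (j + n) (gaussMap^[n] x) - LL (h (j + n)) (gaussMap^[n + 1] x)))) := by
      intro N j
      apply Measurable.ennreal_ofReal
      apply Real.measurable_exp.comp
      apply Measurable.const_mul
      apply Finset.measurable_sum
      intro n _
      exact ((hm _).comp (hit n)).sub ((hL _).comp (hit (n+1)))
    rw [gm_unfold (hmeas (N+1) j)]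
    set M := ENNReal.ofReal (Real.exp (4 * C ^ 2 * t ^ 2)) with hM
    calc _ ≤ ∫⁻ y, M * ENNReal.ofReal (Real.exp (t * ∑ n ∈ Finset.range N,
      (h (j + 1 + n) (gaussMap^[n] y) - LL (h (j + 1 + n)) (gaussMap^[n + 1] y)))) ∂gm := by
          apply lintegral_mono_ae
          filter_upwards [gm_mem] with y hy
          have e : ∀ k, ENNReal.ofReal (Real.exp (t * ∑ n ∈ Finset.range (N+1),
            (h (j + n) (gaussMap^[n] (br k y)) - LL (h (j + n)) (gaussMap^[n + 1] (br k y))))) =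
            ENNReal.ofReal (Real.exp (t * (h j (br k y) - LL (h j) y))) *
            ENNReal.ofReal (Real.exp (t * ∑ n ∈ Finset.range N,
              (h (j + 1 + n) (gaussMap^[n] y) - LL (h (j + 1 + n)) (gaussMap^[n + 1] y)))) := by
            intro k
            rw [← ENNReal.ofReal_mul (Real.exp_pos _).le, ← Real.exp_add, ← mul_add,
              Finset.sum_range_succ']
            simp only [Function.iterate_succ_apply, gaussMap_br k hy, Function.iterate_zero, id,
              add_zero]
            rw [add_comm (Finset.sum _ _)]
            congr 5
            funext n
            rw [show j + (n + 1) = j + 1 + n by ring]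
          simp_rw [e, ← mul_assoc]
          rw [ENNReal.tsum_mul_right]
          gcongr
          exact LL_exp (hB j) t hy
      _ = M * ∫⁻ y, ENNReal.ofReal (Real.exp (t * ∑ n ∈ Finset.range N,
      (h (j + 1 + n) (gaussMap^[n] y) - LL (h (j + 1 + n)) (gaussMap^[n + 1] y)))) ∂gm :=
          lintegral_const_mul _ (hmeas N (j+1))
      _ ≤ M * (M ^ N * gm Set.univ) := by gcongr; exact ih (j+1)
      _ = _ := by rw [pow_succ']; ring

lemma measurable_LL {f : ℝ → ℝ} (hf : Measurable f) : Measurable (LL f) := by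
  unfold LL
  apply Measurable.ite measurableSet_Ioo _ measurable_const
  exact Measurable.tsum fun k => (measurable_ps k).mul (hf.comp (measurable_br k))

open Classical in
/-- centred indicator -/
noncomputable def fk (j : ℕ) (c : ℝ) (x : ℝ) : ℝ := (if ⌊x⁻¹⌋ = (j : ℤ) + 1 then 1 else 0) - c

lemma measurable_fk (j : ℕ) (c : ℝ) : Measurable (fk j c) := by
  unfold fk
  apply Measurable.sub_const
  apply Measurable.ite _ measurable_const measurable_const
  exact (Int.measurable_floor.comp measurable_inv) (measurableSet_singleton ((j:ℤ)+1))

lemma fk_bound (j : ℕ) (c x : ℝ) : |fk j c x| ≤ 1 + |c| := by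
  unfold fk
  refine (abs_sub _ _).trans ?_
  gcongr
  split_ifs <;> simp

lemma LL_fk (j : ℕ) (c : ℝ) {y : ℝ} (hy : y ∈ Set.Ioo (0:ℝ) 1) :
    HasSum (fun k => ps k y * fk j c (br k y)) (ps j y - c) := by
  have h1 : HasSum (fun k => ps k y * (if ⌊(br k y)⁻¹⌋ = (j : ℤ) + 1 then (1:ℝ) else 0)) (ps j y) := by
    have := hasSum_ite_eq j (ps j y)
    convert this using 2 with k
    rw [floor_br k hy]
    by_cases h : k = j
    · simp [h]
    · have : ¬ ((k:ℤ) + 1 = j + 1) := by omega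
      simp [h]
  have h2 := h1.sub ((hasSum_ps hy.1.le).mul_right c)
  rw [one_mul] at h2
  have e : (fun k => ps k y * fk j c (br k y)) = fun k =>
      ps k y * (if ⌊(br k y)⁻¹⌋ = (j : ℤ) + 1 then (1:ℝ) else 0) - ps k y * c := by
    funext k
    unfold fk
    rw [mul_sub]
  rw [e]
  exact h2

lemma ps_lip_all (j : ℕ) {x y : ℝ} (hx : x ∈ Set.Ioo (0:ℝ) 1) (hy : y ∈ Set.Ioo (0:ℝ) 1) :
    |ps j x - ps j y| ≤ |x - y| := by
  rcases Nat.eq_zero_or_pos j with rfl | hj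
  · obtain ⟨hx0, hx1⟩ := hx
    obtain ⟨hy0, hy1⟩ := hy
    have e : ps 0 x - ps 0 y = (y - x) / ((2+x)*(2+y)) := by
      unfold ps; push_cast; field_simp; ring
    rw [e, abs_div, abs_sub_comm y x]
    apply div_le_self (abs_nonneg _)
    rw [abs_of_pos (by positivity)]
    nlinarith
  · refine (ps_lip j hj hx hy).trans ?_
    have h1 : ps j 1 ≤ 1 := le_hasSum (hasSum_ps zero_le_one) j fun i _ => ps_nonneg i zero_le_one
    have h0 := abs_nonneg (x - y)
    nlinarith

/-- The limiting frequency. -/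
noncomputable def cc (j : ℕ) : ℝ :=
  (Real.log 2)⁻¹ * Real.log (((j:ℝ) + 2) ^ 2 / (((j:ℝ) + 1) * ((j:ℝ) + 3)))

lemma gm_q (j : ℕ) : ∫ y, (ps j y - cc j) ∂gm = 0 := by
  rw [gm, integral_withDensity_eq_integral_toReal_smul₀ measurable_dens.aemeasurable
    (Eventually.of_forall fun x => ENNReal.ofReal_lt_top)]
  have e : ∫ x in Set.Ioo (0:ℝ) 1, (ENNReal.ofReal (1 / (1 + x))).toReal • (ps j x - cc j) =
    ∫ x in Set.Ioo (0:ℝ) 1, ((j + 1 + x)⁻¹ - (j + 2 + x)⁻¹ - cc j * (1 + x)⁻¹) := by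
    apply setIntegral_congr_fun measurableSet_Ioo
    intro x hx
    have := hx.1
    simp only [smul_eq_mul]
    rw [ENNReal.toReal_ofReal (by positivity)]
    unfold ps
    field_simp
    ring
  rw [e, ← integral_Ioc_eq_integral_Ioo, ← intervalIntegral.integral_of_le zero_le_one]
  have hd : ∀ a : ℝ, 0 < a → ∀ x ∈ Set.uIcc (0:ℝ) 1,
      HasDerivAt (fun x => Real.log (a + x)) (a + x)⁻¹ x := by
    intro a ha x hx
    rw [Set.uIcc_of_le zero_le_one] at hx
    have h1 : a + x ≠ 0 := by have := hx.1; positivity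
    simpa using ((hasDerivAt_id x).const_add a).log h1
  have hc : ∀ a : ℝ, 0 < a → ContinuousOn (fun x : ℝ => (a + x)⁻¹) (Set.uIcc (0:ℝ) 1) := by
    intro a ha
    apply ContinuousOn.inv₀ (by fun_prop)
    intro x hx
    rw [Set.uIcc_of_le zero_le_one] at hx
    have := hx.1
    positivity
  rw [intervalIntegral.integral_eq_sub_of_hasDerivAt
    (f := fun x => Real.log (j + 1 + x) - Real.log (j + 2 + x) - cc j * Real.log (1 + x))]
  · unfold cc
    have h2 : Real.log 2 ≠ 0 := (Real.log_pos one_lt_two).ne'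
    rw [Real.log_div (by positivity) (by positivity), Real.log_mul (by positivity) (by positivity),
      Real.log_pow]
    norm_num
    rw [show (j:ℝ) + 1 + 1 = j + 2 by ring, show (j:ℝ) + 2 + 1 = j + 3 by ring]
    field_simp
    ring
  · intro x hx
    exact ((hd _ (by positivity) x hx).sub (hd _ (by positivity) x hx)).sub
      ((hd 1 one_pos x hx).const_mul _)
  · apply ContinuousOn.intervalIntegrable
    exact ((hc _ (by positivity)).sub (hc _ (by positivity))).sub ((hc 1 one_pos).const_smul (cc j))

/-- corrector sequence -/
noncomputable def gs (j : ℕ) (w : ℕ → ℝ) : ℕ → ℝ → ℝ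
  | 0 => fun _ => 0
  | n + 1 => LL (fun x => w n * fk j (cc j) x + gs j w n x)

lemma gs_prop (j : ℕ) (w : ℕ → ℝ) (hw : ∀ n, |w n| ≤ 1) (n : ℕ) :
    Measurable (gs j w n) ∧ (∀ x, |gs j w n x| ≤ 24) ∧ ∫ x, gs j w n x ∂gm = 0 ∧
    ∀ x ∈ Set.Ioo (0:ℝ) 1, ∀ y ∈ Set.Ioo (0:ℝ) 1, |gs j w n x - gs j w n y| ≤ 24 * |x - y| := by
  induction n with
  | zero =>
    refine ⟨measurable_const, by simp [gs], by simp [gs], ?_⟩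
    intro x _ y _
    simp [gs]
  | succ n ih =>
    obtain ⟨hm, hb, hi, hl⟩ := ih
    have hB : ∀ x ∈ Set.Ioo (0:ℝ) 1, |gs j w n x| ≤ 24 := fun x _ => hb x
    have M : Measurable (gs j w (n+1)) :=
      measurable_LL (((measurable_fk j _).const_mul _).add hm)
    have e : ∀ y ∈ Set.Ioo (0:ℝ) 1, gs j w (n+1) y = w n * (ps j y - cc j) + LL (gs j w n) y := by
      intro y hy
      rw [gs, LL, if_pos hy]
      have := ((LL_fk j (cc j) hy).mul_left (w n)).add (LL_hasSum hB hy)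
      rw [← this.tsum_eq]
      congr 1
      funext k
      ring
    have lip : ∀ x ∈ Set.Ioo (0:ℝ) 1, ∀ y ∈ Set.Ioo (0:ℝ) 1,
        |gs j w (n+1) x - gs j w (n+1) y| ≤ 24 * |x - y| := by
      intro x hx y hy
      rw [e x hx, e y hy]
      have h1 := LL_lip hB (by norm_num) hl hx hy
      have h2 := ps_lip_all j hx hy
      have h3 : |w n * (ps j x - ps j y)| ≤ 1 * |x - y| := by
        rw [abs_mul]
        gcongr
        exact hw n
      calc _ = |w n * (ps j x - ps j y) + (LL (gs j w n) x - LL (gs j w n) y)| := by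
            congr 1; ring
        _ ≤ _ := abs_add_le _ _
        _ ≤ _ := by linarith
    have int0 : ∫ x, gs j w (n+1) x ∂gm = 0 := by
      have hL := measurable_LL hm
      have : gs j w (n+1) =ᵐ[gm] fun y => w n * (ps j y - cc j) + LL (gs j w n) y :=
        gm_mem.mono e
      rw [integral_congr_ae this, integral_add, integral_const_mul, gm_q, LL_integral hB hm hL, hi]
      · simp
      · apply Integrable.const_mul
        apply Integrable.of_bound ((measurable_ps j).sub_const _).aestronglyMeasurable (1 + |cc j|)
        filter_upwards [gm_mem] with x hx
        refine (abs_sub _ _).trans ?_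
        gcongr
        rw [abs_of_nonneg (ps_nonneg j hx.1.le)]
        exact le_hasSum (hasSum_ps hx.1.le) j fun i _ => ps_nonneg i hx.1.le
      · exact Integrable.of_bound hL.aestronglyMeasurable 24
          (gm_mem.mono fun x hx => LL_bound hB hx)
    refine ⟨M, ?_, int0, lip⟩
    intro y
    by_cases hy : y ∈ Set.Ioo (0:ℝ) 1
    · have hbd : ∀ᵐ x ∂gm, ‖gs j w (n+1) y - gs j w (n+1) x‖ ≤ 24 := by
        filter_upwards [gm_mem] with x hx
        refine (lip y hy x hx).trans ?_
        have : |y - x| ≤ 1 := by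
          rw [abs_le]; constructor <;> linarith [hx.1, hx.2, hy.1, hy.2]
        linarith
      have h1 := norm_integral_le_of_norm_le_const hbd
      have hint : Integrable (gs j w (n+1)) gm := by
        apply Integrable.of_bound M.aestronglyMeasurable (|gs j w (n+1) y| + 24)
        filter_upwards [hbd] with x hx
        rw [Real.norm_eq_abs] at *
        have := abs_le.1 hx
        have h2 := le_abs_self (gs j w (n+1) y)
        have h3 := neg_abs_le (gs j w (n+1) y)
        rw [abs_le]; constructor <;> linarith
      rw [integral_sub (integrable_const _) hint, int0, sub_zero, integral_const, norm_smul,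
        Real.norm_eq_abs, Real.norm_eq_abs, abs_of_pos gm_pos, mul_comm] at h1
      exact le_of_mul_le_mul_right h1 gm_pos
    · rw [gs, LL, if_neg hy]; norm_num

lemma conc (j : ℕ) {ε : ℝ} (hε : 0 < ε) : ∃ D : ENNReal, D ≠ ⊤ ∧ ∃ r : ENNReal, r < 1 ∧
    ∀ w : ℕ → ℝ, (∀ n, |w n| ≤ 1) → ∀ N : ℕ,
      gm {x | ε * N ≤ ∑ n ∈ Finset.range N, w n * fk j (cc j) (gaussMap^[n] x)} ≤ D * r ^ N := by
  set C : ℝ := 25 + |cc j| with hC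
  have hCpos : 0 < C := by positivity
  set t : ℝ := ε / (8 * C ^ 2) with ht
  have htpos : 0 < t := by positivity
  refine ⟨ENNReal.ofReal (Real.exp (24 * t)) * gm Set.univ,
    ENNReal.mul_ne_top ENNReal.ofReal_ne_top (measure_ne_top _ _),
    ENNReal.ofReal (Real.exp (- (ε ^ 2 / (16 * C ^ 2)))), ?_, ?_⟩
  · rw [ENNReal.ofReal_lt_one]
    rw [Real.exp_lt_one_iff]
    have : 0 < ε ^ 2 / (16 * C ^ 2) := by positivity
    linarith
  · intro w hw N
    set h : ℕ → ℝ → ℝ := fun n x => w n * fk j (cc j) x + gs j w n x with hh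
    have P := gs_prop j w hw
    have hm : ∀ n, Measurable (h n) := fun n => ((measurable_fk j _).const_mul _).add (P n).1
    have hL : ∀ n, Measurable (LL (h n)) := fun n => measurable_LL (hm n)
    have hB : ∀ n, ∀ x ∈ Set.Ioo (0:ℝ) 1, |h n x| ≤ C := by
      intro n x _
      refine (abs_add_le _ _).trans ?_
      have h1 := (P n).2.1 x
      have h2 : |w n * fk j (cc j) x| ≤ 1 * (1 + |cc j|) := by
        rw [abs_mul]
        gcongr
        · exact hw n
        · exact fk_bound _ _ _
      rw [hC]; linarith
    have key := exp_moment hm hL hB t N 0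
    simp only [zero_add] at key
    set U : ℝ → ℝ := fun x => ∑ n ∈ Finset.range N,
      (h n (gaussMap^[n] x) - LL (h n) (gaussMap^[n + 1] x)) with hU
    have tel : ∀ x, ∑ n ∈ Finset.range N, w n * fk j (cc j) (gaussMap^[n] x) =
        U x + gs j w N (gaussMap^[N] x) := by
      intro x
      have : ∀ n, h n (gaussMap^[n] x) - LL (h n) (gaussMap^[n + 1] x) =
          w n * fk j (cc j) (gaussMap^[n] x) -
          (gs j w (n+1) (gaussMap^[n + 1] x) - gs j w n (gaussMap^[n] x)) := by
        intro n
        rw [show LL (h n) = gs j w (n+1) from rfl, hh]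
        ring
      rw [hU]
      simp only [this]
      rw [Finset.sum_sub_distrib, Finset.sum_range_sub (fun n => gs j w n (gaussMap^[n] x))]
      simp [gs]
    have hit : ∀ n, Measurable (gaussMap^[n]) := fun n => measurable_gaussMap.iterate n
    have hUm : Measurable fun x => ENNReal.ofReal (Real.exp (t * U x)) := by
      apply Measurable.ennreal_ofReal
      apply Real.measurable_exp.comp
      apply Measurable.const_mul
      apply Finset.measurable_sum
      intro n _
      exact ((hm _).comp (hit n)).sub ((hL _).comp (hit (n+1)))
    have mk := mul_meas_ge_le_lintegral (μ := gm) hUm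
      (ENNReal.ofReal (Real.exp (t * (ε * N - 24))))
    have sub : gm {x | ε * N ≤ ∑ n ∈ Finset.range N, w n * fk j (cc j) (gaussMap^[n] x)} ≤
        gm {x | ENNReal.ofReal (Real.exp (t * (ε * N - 24))) ≤
          ENNReal.ofReal (Real.exp (t * U x))} := by
      apply measure_mono
      intro x hx
      rw [Set.mem_ofPred_eq, tel] at hx
      apply ENNReal.ofReal_le_ofReal
      apply Real.exp_le_exp.2
      apply mul_le_mul_of_nonneg_left _ htpos.le
      have := (abs_le.1 ((P N).2.1 (gaussMap^[N] x))).2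
      linarith
    have mk2 := mk.trans key
    have inv : ENNReal.ofReal (Real.exp (-(t * (ε * N - 24)))) *
        ENNReal.ofReal (Real.exp (t * (ε * N - 24))) = 1 := by
      rw [← ENNReal.ofReal_mul (Real.exp_pos _).le, ← Real.exp_add]
      simp
    calc _ ≤ _ := sub
      _ = ENNReal.ofReal (Real.exp (-(t * (ε * N - 24)))) *
        (ENNReal.ofReal (Real.exp (t * (ε * N - 24))) * gm {x | ENNReal.ofReal (Real.exp (t * (ε * N - 24))) ≤
          ENNReal.ofReal (Real.exp (t * U x))}) := by rw [← mul_assoc, inv, one_mul]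
      _ ≤ ENNReal.ofReal (Real.exp (-(t * (ε * N - 24)))) *
        (ENNReal.ofReal (Real.exp (4 * C ^ 2 * t ^ 2)) ^ N * gm Set.univ) := by gcongr
      _ = _ := by
        rw [← mul_assoc, mul_assoc _ (gm Set.univ), mul_comm (gm Set.univ), ← mul_assoc]
        congr 1
        rw [← ENNReal.ofReal_pow (Real.exp_pos _).le, ← ENNReal.ofReal_pow (Real.exp_pos _).le,
          ← ENNReal.ofReal_mul (Real.exp_pos _).le, ← ENNReal.ofReal_mul (Real.exp_pos _).le,
          ← Real.exp_nat_mul, ← Real.exp_nat_mul, ← Real.exp_add, ← Real.exp_add]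
        congr 2
        rw [ht]
        field_simp
        ring

lemma ae_small (j : ℕ) (w : ℕ → ℕ → ℝ) (hw : ∀ N n, |w N n| ≤ 1) {ε : ℝ} (hε : 0 < ε) :
    ∀ᵐ x ∂gm, ∀ᶠ N : ℕ in atTop,
      ∑ n ∈ Finset.range N, w N n * fk j (cc j) (gaussMap^[n] x) < ε * N := by
  obtain ⟨D, hD, r, hr, H⟩ := conc j hε
  have := ae_eventually_notMem (μ := gm)
    (s := fun N => {x | ε * N ≤ ∑ n ∈ Finset.range N, w N n * fk j (cc j) (gaussMap^[n] x)}) ?_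
  · filter_upwards [this] with x hx
    filter_upwards [hx] with N hN
    simpa using hN
  · apply ne_top_of_le_ne_top _ (ENNReal.tsum_le_tsum fun N => H (w N) (hw N) N)
    rw [ENNReal.tsum_mul_left, ENNReal.tsum_geometric]
    apply ENNReal.mul_ne_top hD
    rw [ENNReal.inv_ne_top]
    exact (tsub_pos_of_lt hr).ne'

lemma ae_tendsto (j : ℕ) (w : ℕ → ℕ → ℝ) (hw : ∀ N n, |w N n| ≤ 1) :
    ∀ᵐ x ∂gm, Tendsto (fun N : ℕ =>
      (N + 1 : ℝ)⁻¹ * ∑ n ∈ Finset.range N, w N n * fk j (cc j) (gaussMap^[n] x)) atTop (nhds 0) := by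
  have h1 : ∀ m : ℕ, ∀ᵐ x ∂gm, ∀ᶠ N : ℕ in atTop,
      ∑ n ∈ Finset.range N, w N n * fk j (cc j) (gaussMap^[n] x) < 1 / ((m:ℝ) + 1) * N :=
    fun m => ae_small j w hw (by positivity)
  have h2 : ∀ m : ℕ, ∀ᵐ x ∂gm, ∀ᶠ N : ℕ in atTop,
      ∑ n ∈ Finset.range N, (-w N n) * fk j (cc j) (gaussMap^[n] x) < 1 / ((m:ℝ) + 1) * N :=
    fun m => ae_small j (fun N n => -w N n) (by simpa using hw) (by positivity)
  filter_upwards [ae_all_iff.2 h1, ae_all_iff.2 h2] with x hx1 hx2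
  rw [Metric.tendsto_atTop']
  intro ε hε
  obtain ⟨m, hm⟩ := exists_nat_one_div_lt hε
  obtain ⟨N0, hN0⟩ := eventually_atTop.1 ((hx1 m).and (hx2 m))
  refine ⟨N0, fun N hN => ?_⟩
  obtain ⟨a, b⟩ := hN0 N hN.le
  simp only [neg_mul, Finset.sum_neg_distrib] at b
  rw [dist_zero_right, norm_mul, Real.norm_eq_abs, Real.norm_eq_abs, abs_of_pos (by positivity)]
  have hab : |∑ n ∈ Finset.range N, w N n * fk j (cc j) (gaussMap^[n] x)| ≤ 1 / ((m:ℝ) + 1) * N := by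
    rw [abs_le]; constructor <;> linarith
  rw [inv_mul_lt_iff₀ (by positivity)]
  have : (0:ℝ) ≤ N := by positivity
  nlinarith

lemma legendre_sum {p : ℕ} (hp : p.Prime) (h2 : p ≠ 2) :
    ∑ n ∈ Finset.Ico 1 p, (legendre p n : ℝ) = 0 := by
  classical
  have : Fact p.Prime := ⟨hp⟩
  have hq : ∀ n : ℕ, legendre p n = quadraticChar (ZMod p) (n : ZMod p) := by
    intro n
    rw [quadraticChar_apply, quadraticCharFun, legendre]
    congr
  have h := quadraticChar_sum_zero (F := ZMod p) (by rwa [ZMod.ringChar_zmod_n])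
  have h3 : ∑ n ∈ Finset.range p, legendre p n = ∑ a : ZMod p, quadraticChar (ZMod p) a := by
    refine Finset.sum_nbij' (fun n => (n : ZMod p)) (fun a => a.val) ?_ ?_ ?_ ?_ ?_
    · intro a _; simp
    · intro a _; simpa using ZMod.val_lt a
    · intro a ha; exact ZMod.val_cast_of_lt (Finset.mem_range.1 ha)
    · intro a _; exact ZMod.natCast_zmod_val a
    · intro a _; exact hq a
  rw [h, Finset.range_eq_Ico, Finset.sum_eq_sum_Ico_succ_bot hp.pos] at h3
  have h0 : legendre p 0 = 0 := by simp [legendre]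
  rw [h0, zero_add] at h3
  exact_mod_cast h3

lemma legendre_count {p : ℕ} (hp : p.Prime) (h2 : p ≠ 2) :
    ∑ n ∈ Finset.Ico 1 p, (if legendre p n = 1 then (1:ℝ) else 0) = ((p:ℝ) - 1) / 2 := by
  have h : ∀ n ∈ Finset.Ico 1 p, (if legendre p n = 1 then (1:ℝ) else 0) =
      1 / 2 + (legendre p n : ℝ) * (1/2) := by
    intro n hn
    rw [Finset.mem_Ico] at hn
    have : (n : ZMod p) ≠ 0 := by
      rw [Ne, ZMod.natCast_eq_zero_iff]
      exact Nat.not_dvd_of_pos_of_lt (by omega) hn.2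
    unfold legendre
    rw [if_neg this]
    by_cases hs : IsSquare (n : ZMod p)
    · rw [if_pos hs]; norm_num
    · rw [if_neg hs]; norm_num
  rw [Finset.sum_congr rfl h, Finset.sum_add_distrib, ← Finset.sum_mul, legendre_sum hp h2]
  simp [Nat.cast_sub hp.one_le]
  ring

open scoped Classical in
/-- Fix `k ≥ 1`. For Lebesgue-almost every `x ∈ (0,1)` and every sparse infinite set `P`
of primes, `(1/p)·#{1 ≤ n < p : (n/p) = 1 and aₙ(x) = k}` converges, as `p → ∞` along `P`,
to `(1/(2 log 2)) log((k+1)²/(k(k+2)))`. -/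
theorem legendre_continued_fraction_average (k : ℕ) (hk : 1 ≤ k) :
    ∀ᵐ x ∂(MeasureTheory.volume.restrict (Set.Ioo (0:ℝ) 1)),
      ∀ P : Set ℕ, (∀ p ∈ P, p.Prime) → P.Infinite →
        (Summable fun p : P => (Real.log p) ^ 2 / p) →
        Tendsto
          (fun p : ℕ =>
            (p : ℝ)⁻¹ *
              ((Finset.Ico 1 p).filter
                (fun n => legendre p n = 1 ∧ partialQuotient n x = k)).card)
          (atTop ⊓ 𝓟 P)
          (nhds ((2 * Real.log 2)⁻¹ *
            Real.log (((k : ℝ) + 1) ^ 2 / ((k : ℝ) * ((k : ℝ) + 2))))) := by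
  obtain ⟨j, rfl⟩ : ∃ j, k = j + 1 := ⟨k - 1, by omega⟩
  have hae := ac_gm.ae_le (ae_tendsto j
    (fun N n => if legendre (N + 1) (n + 1) = 1 then 1 else 0)
    (by intro N n; split_ifs <;> simp))
  filter_upwards [hae] with x hx
  intro P hP _ _
  have hc : (2 * Real.log 2)⁻¹ * Real.log ((((j + 1 : ℕ) : ℝ) + 1) ^ 2 /
      (((j + 1 : ℕ) : ℝ) * (((j + 1 : ℕ) : ℝ) + 2))) = 0 + (1/2 - 0) * cc j := by
    unfold cc
    push_cast
    rw [show (j:ℝ) + 1 + 1 = j + 2 by ring, show (j:ℝ) + 1 + 2 = j + 3 by ring, mul_inv]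
    ring
  rw [hc]
  have hx' : Tendsto (fun p : ℕ => (((p - 1 : ℕ) : ℝ) + 1)⁻¹ * ∑ n ∈ Finset.range (p - 1),
      (if legendre ((p - 1) + 1) (n + 1) = 1 then 1 else 0) * fk j (cc j) (gaussMap^[n] x))
      atTop (nhds 0) := hx.comp (tendsto_sub_atTop_nat 1)
  have hlim : Tendsto (fun p : ℕ => (1/2 - (p:ℝ)⁻¹ * (1/2)) * cc j) atTop
      (nhds ((1/2 - 0) * cc j)) := by
    apply Tendsto.mul_const
    apply Tendsto.const_sub
    simpa using (tendsto_inv_atTop_nhds_zero_nat (𝕜 := ℝ)).mul_const (1/2 : ℝ)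
  refine ((hx'.add hlim).mono_left inf_le_left).congr' ?_
  have e1 : ∀ᶠ p in atTop ⊓ 𝓟 P, p ∈ P := mem_inf_of_right (mem_principal_self P)
  have e2 : ∀ᶠ p in atTop ⊓ 𝓟 P, 3 ≤ p := mem_inf_of_left (eventually_ge_atTop 3)
  filter_upwards [e1, e2] with p hpP hp3
  have hp := hP p hpP
  have hcount := legendre_count hp (by omega)
  rw [Finset.sum_Ico_eq_sum_range] at hcount
  rw [Finset.card_filter, Finset.sum_Ico_eq_sum_range]
  have hp1 : p - 1 + 1 = p := by omega
  have hp1' : (((p - 1 : ℕ) : ℝ) + 1) = p := by exact_mod_cast hp1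
  rw [hp1, hp1']
  have hsum : ((∑ i ∈ Finset.range (p - 1), (if legendre p (1 + i) = 1 ∧
      partialQuotient (1 + i) x = ((j + 1 : ℕ) : ℤ) then 1 else 0) : ℕ) : ℝ) =
      ∑ n ∈ Finset.range (p - 1), (if legendre p (n + 1) = 1 then 1 else 0) *
        fk j (cc j) (gaussMap^[n] x) + ((p:ℝ) - 1) / 2 * cc j := by
    rw [← hcount, Finset.sum_mul, ← Finset.sum_add_distrib]
    push_cast
    apply Finset.sum_congr rfl
    intro n _
    rw [add_comm 1 n, partialQuotient, Nat.add_sub_cancel, fk]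
    by_cases hl : legendre p (n + 1) = 1 <;> simp [hl]
  rw [hsum]
  have hp0 : (p:ℝ) ≠ 0 := by positivity
  field_simp
end

section
/- There exists a sequence (a_p), indexed by the primes, of integers with 0 ≤ a_p < p for every prime p, such that for Lebesgue-almost every θ ∈ [0,1] there exist infinitely many primes p with |θ − a_p/p| ≤ 1/(100p). -/
open MeasureTheory

lemma span_mul_cos (f : ℝ → ℝ)
    (hf : f ∈ Submodule.span ℝ (Set.range (fun (k : ℕ) (x : ℝ) => Real.cos (2 * Real.pi * k * x)))) :
    (fun x => Real.cos (2 * Real.pi * x) * f x) ∈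
      Submodule.span ℝ (Set.range (fun (k : ℕ) (x : ℝ) => Real.cos (2 * Real.pi * k * x))) := by
  induction hf using Submodule.span_induction with
  | mem f h =>
    obtain ⟨k, rfl⟩ := h
    rcases k with _ | k
    · refine Submodule.subset_span ⟨1, ?_⟩
      ext x; simp
    · have : (fun x : ℝ => Real.cos (2 * Real.pi * x) * Real.cos (2 * Real.pi * (k + 1 : ℕ) * x))
        = (1/2 : ℝ) • (fun x : ℝ => Real.cos (2 * Real.pi * (k : ℕ) * x))
        + (1/2 : ℝ) • (fun x : ℝ => Real.cos (2 * Real.pi * (k + 2 : ℕ) * x)) := by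
        ext x
        simp only [Pi.add_apply, Pi.smul_apply, smul_eq_mul]
        have h1 : 2 * Real.pi * (k : ℕ) * x = 2 * Real.pi * (k + 1 : ℕ) * x - 2 * Real.pi * x := by
          push_cast; ring
        have h2 : 2 * Real.pi * (k + 2 : ℕ) * x = 2 * Real.pi * (k + 1 : ℕ) * x + 2 * Real.pi * x := by
          push_cast; ring
        rw [h1, h2, Real.cos_sub, Real.cos_add]; ring
      rw [this]
      exact Submodule.add_mem _ (Submodule.smul_mem _ _ (Submodule.subset_span ⟨k, rfl⟩))
        (Submodule.smul_mem _ _ (Submodule.subset_span ⟨k + 2, rfl⟩))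
  | zero =>
    simp only [Pi.zero_apply, mul_zero]
    exact Submodule.zero_mem _
  | add f g _ _ h1 h2 =>
    convert Submodule.add_mem _ h1 h2 using 1
    ext x; simp [mul_add]
  | smul a f _ h =>
    convert Submodule.smul_mem _ a h using 1
    ext x; simp; ring

lemma span_test (α : ℝ) (N : ℕ) :
    (fun x => (Real.cos (2 * Real.pi * x) - α) * (1 + Real.cos (2 * Real.pi * x)) ^ N) ∈
      Submodule.span ℝ (Set.range (fun (k : ℕ) (x : ℝ) => Real.cos (2 * Real.pi * k * x))) := by
  induction N with
  | zero =>
    have : (fun x : ℝ => (Real.cos (2 * Real.pi * x) - α) * (1 + Real.cos (2 * Real.pi * x)) ^ 0)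
      = (fun x : ℝ => Real.cos (2 * Real.pi * (1 : ℕ) * x))
        + (-α) • (fun x : ℝ => Real.cos (2 * Real.pi * (0 : ℕ) * x)) := by
      ext x; simp; ring
    rw [this]
    exact Submodule.add_mem _ (Submodule.subset_span ⟨1, rfl⟩)
        (Submodule.smul_mem _ _ (Submodule.subset_span ⟨0, rfl⟩))
  | succ N ih =>
    convert Submodule.add_mem _ ih (span_mul_cos _ ih) using 1
    ext x; simp; ring

lemma int_cos (k : ℕ) (hk : k ≠ 0) : ∫ x in (0:ℝ)..1, Real.cos (2 * Real.pi * k * x) = 0 := by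
  have : (2 * Real.pi * k) ≠ 0 := by positivity
  rw [intervalIntegral.integral_comp_mul_left (fun x => Real.cos x) this]
  simp only [integral_cos]
  have : 2 * Real.pi * k * 1 = (2 * k : ℕ) * Real.pi := by push_cast; ring
  rw [this, Real.sin_nat_mul_pi]; simp

lemma mean_pos (β : ℝ) (hβ : β < 1) : ∃ N : ℕ,
    0 < ∫ x in (0:ℝ)..1, (Real.cos (2 * Real.pi * x) - (2 * β - 1)) *
      (1 + Real.cos (2 * Real.pi * x)) ^ N := by
  obtain ⟨N, hN⟩ := exists_nat_gt (1 / (1 - β))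
  refine ⟨N, ?_⟩
  set W : ℕ → ℝ := fun n => ∫ x in (0:ℝ)..Real.pi, Real.cos x ^ (2 * n) with hW
  have hrec : W (N + 1) = (2 * N + 1) / (2 * N + 2) * W N := by
    simp only [hW]
    rw [show 2 * (N + 1) = 2 * N + 2 by ring, integral_cos_pow]
    simp
  have hpos : 0 < W N := by
    apply intervalIntegral.integral_pos Real.pi_pos
    · fun_prop
    · intro x _
      exact (even_two_mul N).pow_nonneg _
    · exact ⟨0, ⟨le_rfl, Real.pi_pos.le⟩, by simp⟩
  have h1 : ∫ x in (0:ℝ)..1, (Real.cos (2 * Real.pi * x) - (2 * β - 1)) *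
      (1 + Real.cos (2 * Real.pi * x)) ^ N
      = Real.pi⁻¹ * (2 ^ (N + 1) * (W (N + 1) - β * W N)) := by
    have e : ∀ x : ℝ, (Real.cos (2 * Real.pi * x) - (2 * β - 1)) *
      (1 + Real.cos (2 * Real.pi * x)) ^ N =
        (fun y => 2 ^ (N + 1) * (Real.cos y ^ (2 * (N + 1)) - β * Real.cos y ^ (2 * N))) (Real.pi * x) := by
      intro x
      rw [show 2 * Real.pi * x = 2 * (Real.pi * x) by ring, Real.cos_two_mul]
      simp only [pow_mul]
      rw [show 1 + (2 * Real.cos (Real.pi * x) ^ 2 - 1) = 2 * Real.cos (Real.pi * x) ^ 2 by ring, mul_pow]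
      ring
    rw [intervalIntegral.integral_congr (fun x _ => e x), intervalIntegral.integral_comp_mul_left
      (fun y => 2 ^ (N + 1) * (Real.cos y ^ (2 * (N + 1)) - β * Real.cos y ^ (2 * N))) Real.pi_ne_zero, intervalIntegral.integral_const_mul,
      intervalIntegral.integral_sub, intervalIntegral.integral_const_mul]
    · simp [hW]
    · exact (by fun_prop : Continuous _).intervalIntegrable _ _
    · exact (by fun_prop : Continuous _).intervalIntegrable _ _
  rw [h1, hrec]
  have h2 : 0 < (2 * N + 1) / (2 * N + 2) - β := by
    have : 0 < 1 - β := by linarith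
    rw [div_lt_iff₀ this] at hN
    rw [sub_pos, lt_div_iff₀ (by positivity)]
    nlinarith
  have : (2 * N + 1) / (2 * N + 2) * W N - β * W N = ((2 * N + 1) / (2 * N + 2) - β) * W N := by ring
  rw [this]
  positivity

lemma exists_minorant : ∃ (c : ℕ →₀ ℝ) (M : ℝ), 0 ≤ M ∧ 0 < c 0 ∧
    (∀ x : ℝ, ∑ k ∈ c.support, c k * Real.cos (2 * Real.pi * k * x) ≤ M) ∧
    (∀ x : ℝ, 0 < ∑ k ∈ c.support, c k * Real.cos (2 * Real.pi * k * x) →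
       ∃ m : ℤ, |x - m| ≤ 1 / 100) := by
  set β : ℝ := Real.cos (Real.pi / 100) ^ 2 with hβ
  have hs : 0 < Real.sin (Real.pi / 100) :=
    Real.sin_pos_of_pos_of_lt_pi (by positivity) (by linarith [Real.pi_pos])
  have hβ1 : β < 1 := by
    have := Real.sin_sq_add_cos_sq (Real.pi / 100)
    nlinarith
  obtain ⟨N, hN⟩ := mean_pos β hβ1
  have hmem := span_test (2 * β - 1) N
  rw [Finsupp.mem_span_range_iff_exists_finsupp] at hmem
  obtain ⟨c, hc⟩ := hmem
  have hc' : ∀ x : ℝ, ∑ k ∈ c.support, c k * Real.cos (2 * Real.pi * k * x) =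
      (Real.cos (2 * Real.pi * x) - (2 * β - 1)) * (1 + Real.cos (2 * Real.pi * x)) ^ N := by
    intro x
    have := congrFun hc x
    simpa [Finsupp.sum, Finset.sum_apply] using this
  refine ⟨c, (1 + |2 * β - 1|) * 2 ^ N, by positivity, ?_, ?_, ?_⟩
  · simp_rw [← hc'] at hN
    rw [intervalIntegral.integral_finsetSum] at hN
    · simp_rw [intervalIntegral.integral_const_mul] at hN
      rw [Finset.sum_eq_single 0] at hN
      · simpa using hN
      · intro k _ hk
        rw [int_cos k hk, mul_zero]
      · intro h; simp at h; simp [h]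
    · intro i _
      exact (by fun_prop : Continuous _).intervalIntegrable _ _
  · intro x
    rw [hc']
    have h1 := Real.cos_le_one (2 * Real.pi * x)
    have h2 := Real.neg_one_le_cos (2 * Real.pi * x)
    have h3 := neg_abs_le (2 * β - 1)
    apply mul_le_mul
    · linarith
    · exact pow_le_pow_left₀ (by linarith) (by linarith) _
    · exact pow_nonneg (by linarith) _
    · positivity
  · intro x hx
    rw [hc'] at hx
    have h2 := Real.neg_one_le_cos (2 * Real.pi * x)
    have h4 : 0 < Real.cos (2 * Real.pi * x) - (2 * β - 1) :=
      pos_of_mul_pos_left hx (pow_nonneg (by linarith) _)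
    refine ⟨round x, ?_⟩
    by_contra! hlt
    have h5 : |x - round x| ≤ 1 / 2 := abs_sub_round x
    have h6 : Real.cos (2 * Real.pi * x) = Real.cos (2 * Real.pi * |x - round x|) := by
      rw [← Real.cos_sub_int_mul_two_pi (2 * Real.pi * x) (round x)]
      rw [← Real.cos_abs, show 2 * Real.pi * x - round x * (2 * Real.pi) = (2 * Real.pi) * (x - round x) by ring,
        abs_mul, abs_of_pos Real.two_pi_pos]
    have h7 : Real.cos (2 * Real.pi * |x - round x|) ≤ Real.cos (2 * (Real.pi / 100)) := by
      apply Real.cos_le_cos_of_nonneg_of_le_pi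
      · positivity
      · nlinarith [Real.pi_pos]
      · nlinarith [Real.pi_pos]
    rw [Real.cos_two_mul] at h7
    linarith

/-- partial sums of `cos (2 π k p θ) / p` over primes -/
noncomputable def primeCosSum (k N : ℕ) (θ : ℝ) : ℝ :=
  ∑ n ∈ (Finset.range N).filter Nat.Prime, (1 / (n : ℝ)) * Real.cos (2 * Real.pi * (k * n : ℕ) * θ)

lemma int_cos_mul_cos (m n : ℕ) (h : m ≠ n) :
    ∫ x in (0:ℝ)..1, Real.cos (2 * Real.pi * m * x) * Real.cos (2 * Real.pi * n * x) = 0 := by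
  wlog hlt : n < m generalizing m n
  · simp_rw [mul_comm (Real.cos (2 * Real.pi * m * _))]
    exact this n m h.symm (by omega)
  have e : ∀ x : ℝ, Real.cos (2 * Real.pi * m * x) * Real.cos (2 * Real.pi * n * x) =
      (1/2) * Real.cos (2 * Real.pi * (m - n : ℕ) * x) + (1/2) * Real.cos (2 * Real.pi * (m + n : ℕ) * x) := by
    intro x
    rw [Nat.cast_sub hlt.le, Nat.cast_add]
    rw [show 2 * Real.pi * ((m : ℝ) - n) * x = 2 * Real.pi * m * x - 2 * Real.pi * n * x by ring,
      show 2 * Real.pi * ((m : ℝ) + n) * x = 2 * Real.pi * m * x + 2 * Real.pi * n * x by ring,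
      Real.cos_sub, Real.cos_add]
    ring
  rw [intervalIntegral.integral_congr (fun x _ => e x), intervalIntegral.integral_add,
    intervalIntegral.integral_const_mul, intervalIntegral.integral_const_mul, int_cos _ (by omega),
    int_cos _ (by omega)]
  · simp
  · exact (by fun_prop : Continuous _).intervalIntegrable _ _
  · exact (by fun_prop : Continuous _).intervalIntegrable _ _

lemma primeCosSum_cont (k N : ℕ) : Continuous (primeCosSum k N) := by
  unfold primeCosSum
  fun_prop

lemma primeCosSum_sq (k N : ℕ) (hk : k ≠ 0) :
    ∫ x in (0:ℝ)..1, primeCosSum k N x ^ 2 ≤ ∑' n : ℕ, 1 / (n : ℝ) ^ 2 := by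
  have hs : Summable (fun n : ℕ => 1 / (n : ℝ) ^ 2) := Real.summable_one_div_nat_pow.2 one_lt_two
  unfold primeCosSum
  simp_rw [pow_two, Finset.sum_mul_sum]
  rw [intervalIntegral.integral_finsetSum
    (fun i _ => (by fun_prop : Continuous _).intervalIntegrable _ _)]
  simp_rw [← pow_two]
  refine le_trans (Finset.sum_le_sum ?_) (hs.sum_le_tsum ((Finset.range N).filter Nat.Prime)
    (fun i _ => by positivity))
  intro i hi
  rw [intervalIntegral.integral_finsetSum
    (fun i _ => (by fun_prop : Continuous _).intervalIntegrable _ _)]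
  have e : ∀ j : ℕ, ∀ x : ℝ, 1 / (i : ℝ) * Real.cos (2 * Real.pi * (k * i : ℕ) * x) *
      (1 / (j : ℝ) * Real.cos (2 * Real.pi * (k * j : ℕ) * x)) =
      (1 / (i : ℝ) * (1 / (j : ℝ))) * (Real.cos (2 * Real.pi * (k * i : ℕ) * x) *
        Real.cos (2 * Real.pi * (k * j : ℕ) * x)) := by intros; ring
  simp_rw [e, intervalIntegral.integral_const_mul]
  rw [Finset.sum_eq_single_of_mem i hi]
  · have : ∫ x in (0:ℝ)..1, Real.cos (2 * Real.pi * (k * i : ℕ) * x) *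
        Real.cos (2 * Real.pi * (k * i : ℕ) * x) ≤ ∫ x in (0:ℝ)..1, (1 : ℝ) := by
      apply intervalIntegral.integral_mono_on zero_le_one
        ((by fun_prop : Continuous _).intervalIntegrable _ _)
        ((by fun_prop : Continuous _).intervalIntegrable _ _)
      intro x _
      rw [← pow_two]
      exact Real.cos_sq_le_one _
    simp only [intervalIntegral.integral_const, sub_zero, smul_eq_mul, mul_one] at this
    calc _ ≤ (1 / (i : ℝ) * (1 / (i : ℝ))) * 1 := by gcongr
      _ = _ := by ring
  · intro j _ hj
    rw [int_cos_mul_cos, mul_zero]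
    intro h
    exact hj (Nat.eq_of_mul_eq_mul_left (Nat.pos_of_ne_zero hk) h).symm

lemma ae_freq_bounded (s : Finset ℕ) (hs : 0 ∉ s) :
    ∀ᵐ θ ∂(volume.restrict (Set.Icc (0:ℝ) 1)), ∃ B : ℝ, ∃ᶠ N in Filter.atTop,
      ∑ k ∈ s, primeCosSum k N θ ^ 2 ≤ B := by
  set C : ℝ := ∑ k ∈ s, ∑' n : ℕ, 1 / (n : ℝ) ^ 2 with hC
  set F : ℕ → ℝ → ENNReal := fun N θ => ENNReal.ofReal (∑ k ∈ s, primeCosSum k N θ ^ 2) with hF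
  have hcont : ∀ N, Continuous (fun θ => ∑ k ∈ s, primeCosSum k N θ ^ 2) := fun N =>
    continuous_finsetSum _ (fun k _ => (primeCosSum_cont k N).pow 2)
  have hmeas : ∀ N, Measurable (F N) := fun N => ENNReal.measurable_ofReal.comp (hcont N).measurable
  have hbound : ∀ N, ∫⁻ θ in Set.Icc (0:ℝ) 1, F N θ ≤ ENNReal.ofReal C := by
    intro N
    rw [hF, ← ofReal_integral_eq_lintegral_ofReal]
    · apply ENNReal.ofReal_le_ofReal
      rw [integral_Icc_eq_integral_Ioc, ← intervalIntegral.integral_of_le zero_le_one,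
        intervalIntegral.integral_finsetSum
        (f := fun k x => primeCosSum k N x ^ 2)
        (fun k _ => ((primeCosSum_cont k N).pow 2).intervalIntegrable _ _)]
      apply Finset.sum_le_sum
      intro k hk
      exact primeCosSum_sq k N (fun h => hs (h ▸ hk))
    · exact (hcont N).continuousOn.integrableOn_compact isCompact_Icc
    · exact Filter.Eventually.of_forall (fun x => Finset.sum_nonneg (fun k _ => sq_nonneg _))
  have hfatou := lintegral_liminf_le (μ := volume.restrict (Set.Icc (0:ℝ) 1))
    (u := Filter.atTop) hmeas
  have hle : Filter.liminf (fun N => ∫⁻ θ in Set.Icc (0:ℝ) 1, F N θ) Filter.atTop ≤ ENNReal.ofReal C := by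
    refine (Filter.liminf_le_limsup).trans (Filter.limsup_le_of_le ?_ ?_)
    · isBoundedDefault
    · exact Filter.Eventually.of_forall hbound
  have hfin := ae_lt_top (Measurable.liminf hmeas)
    (lt_of_le_of_lt (hfatou.trans hle) ENNReal.ofReal_lt_top).ne
  filter_upwards [hfin] with θ hθ
  obtain ⟨b, hb1, hb2⟩ := exists_between hθ
  refine ⟨b.toReal, ?_⟩
  have := Filter.frequently_lt_of_liminf_lt (by isBoundedDefault) hb1
  refine this.mono (fun N hN => ?_)
  exact (ENNReal.ofReal_le_iff_le_toReal hb2.ne).1 hN.le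

lemma ae_not_summable :
    ∀ᵐ θ ∂(volume.restrict (Set.Icc (0:ℝ) 1)),
      ¬ Summable (Set.indicator {p : ℕ | p.Prime ∧ ∃ m : ℤ, |(p : ℝ) * θ - m| ≤ 1 / 100}
        (fun n : ℕ => (1 : ℝ) / n)) := by
  obtain ⟨c, M, hM, hc0, hcM, hcx⟩ := exists_minorant
  filter_upwards [ae_freq_bounded (c.support.erase 0) (by simp)] with θ hθ hsum
  obtain ⟨B, hB⟩ := hθ
  set S := {p : ℕ | p.Prime ∧ ∃ m : ℤ, |(p : ℝ) * θ - m| ≤ 1 / 100} with hS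
  set T := ∑' n, Set.indicator S (fun n : ℕ => (1 : ℝ) / n) n with hT
  set K := ∑ k ∈ c.support.erase 0, |c k| * (1 + B) with hK
  have hdiv := (not_summable_iff_tendsto_nat_atTop_of_nonneg (fun n =>
    Set.indicator_nonneg (fun p _ => by positivity) n)).1 not_summable_one_div_on_primes
  have hev := hdiv.eventually_gt_atTop ((M * T + K) / c 0)
  obtain ⟨N, hN1, hN2⟩ := (hB.and_eventually hev).exists
  have hup : ∑ n ∈ (Finset.range N).filter Nat.Prime,
      (1 / (n : ℝ)) * ∑ k ∈ c.support, c k * Real.cos (2 * Real.pi * k * (n * θ)) ≤ M * T := by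
    calc _ ≤ ∑ n ∈ (Finset.range N).filter Nat.Prime, M * Set.indicator S (fun n : ℕ => (1 : ℝ) / n) n := by
          apply Finset.sum_le_sum
          intro n hn
          by_cases hnS : n ∈ S
          · rw [Set.indicator_of_mem hnS, mul_comm M]
            exact mul_le_mul_of_nonneg_left (hcM _) (by positivity)
          · rw [Set.indicator_of_notMem hnS, mul_zero]
            apply mul_nonpos_of_nonneg_of_nonpos (by positivity)
            by_contra! hpos
            exact hnS ⟨(Finset.mem_filter.1 hn).2, hcx _ hpos⟩
      _ ≤ M * T := by
          rw [← Finset.mul_sum]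
          exact mul_le_mul_of_nonneg_left (hsum.sum_le_tsum _
            (fun i _ => Set.indicator_nonneg (fun p _ => by positivity) i)) hM
  have heq : ∑ n ∈ (Finset.range N).filter Nat.Prime,
      (1 / (n : ℝ)) * ∑ k ∈ c.support, c k * Real.cos (2 * Real.pi * k * (n * θ)) =
      c 0 * (∑ n ∈ Finset.range N, Set.indicator {p | p.Prime} (fun n : ℕ ↦ (1 : ℝ) / n) n)
        + ∑ k ∈ c.support.erase 0, c k * primeCosSum k N θ := by
    have h1 : ∀ n : ℕ, ∑ k ∈ c.support, c k * Real.cos (2 * Real.pi * k * (n * θ)) =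
      c 0 + ∑ k ∈ c.support.erase 0, c k * Real.cos (2 * Real.pi * (k * n : ℕ) * θ) := by
      intro n
      rw [← Finset.add_sum_erase c.support _ (Finsupp.mem_support_iff.2 hc0.ne')]
      congr 1
      · simp
      · apply Finset.sum_congr rfl
        intro k _
        push_cast
        congr 2; ring
    simp_rw [h1, mul_add, Finset.sum_add_distrib]
    congr 1
    · rw [Finset.mul_sum, Finset.sum_filter]
      apply Finset.sum_congr rfl
      intro n _
      by_cases hn : n.Prime <;> simp [hn, mul_comm]
    · simp_rw [primeCosSum, Finset.mul_sum]
      rw [Finset.sum_comm]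
      apply Finset.sum_congr rfl
      intro k _
      apply Finset.sum_congr rfl
      intro n _
      ring
  have hlow : -K ≤ ∑ k ∈ c.support.erase 0, c k * primeCosSum k N θ := by
    rw [hK, ← Finset.sum_neg_distrib]
    apply Finset.sum_le_sum
    intro k hk
    have h1 : primeCosSum k N θ ^ 2 ≤ B :=
      (Finset.single_le_sum (f := fun k => primeCosSum k N θ ^ 2)
        (fun i _ => sq_nonneg _) hk).trans hN1
    have h2 : |primeCosSum k N θ| ≤ 1 + B := by
      rw [abs_le]; constructor <;> nlinarith [sq_nonneg (primeCosSum k N θ - 1), sq_nonneg (primeCosSum k N θ + 1)]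
    have h3 := neg_abs_le (c k * primeCosSum k N θ)
    rw [abs_mul] at h3
    have h4 := mul_le_mul_of_nonneg_left h2 (abs_nonneg (c k))
    linarith
  rw [div_lt_iff₀ hc0] at hN2
  rw [heq] at hup
  linarith

open ProbabilityTheory in
lemma random_choice (θ : ℝ) (hθ : θ < 1) (hθ0 : 0 < θ) (ν : ℕ → Measure ℕ) [∀ n, IsProbabilityMeasure (ν n)]
    (hν : ∀ n a : ℕ, a < n → ν n {a} = 1 / (n : ENNReal))
    (hdiv : ¬ Summable (Set.indicator {p : ℕ | p.Prime ∧ ∃ m : ℤ, |(p : ℝ) * θ - m| ≤ 1 / 100}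
        (fun n : ℕ => (1 : ℝ) / n))) :
    ∀ᵐ ω ∂(Measure.infinitePi ν), {p : ℕ | p.Prime ∧ |θ - (ω p : ℝ) / p| ≤ 1 / (100 * p)}.Infinite := by
  set t : ℕ → Set ℕ := fun p => {a : ℕ | p.Prime ∧ |θ - (a : ℝ) / p| ≤ 1 / (100 * p)} with ht
  set A : ℕ → Set (ℕ → ℕ) := fun p => {ω | ω p ∈ t p} with hA
  have hAm : ∀ p, MeasurableSet (A p) := fun p =>
    (measurable_pi_apply p) (MeasurableSet.of_discrete (s := t p))
  have hpi : ∀ s : Finset ℕ, (⋂ i ∈ s, A i) = Set.pi s t := by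
    intro s; ext ω; simp [hA, Set.mem_pi]
  have hAp : ∀ p, Measure.infinitePi ν (A p) = ν p (t p) := by
    intro p
    have h1 := hpi {p}
    simp only [Finset.mem_singleton, Set.iInter_iInter_eq_left] at h1
    rw [h1, Measure.infinitePi_pi _ (fun _ _ => MeasurableSet.of_discrete)]
    simp
  have hind : iIndepSet A (Measure.infinitePi ν) := by
    rw [iIndepSet_iff_meas_biInter hAm]
    intro s
    rw [hpi, Measure.infinitePi_pi _ (fun _ _ => MeasurableSet.of_discrete)]
    simp_rw [hAp]
  have hsum : ∑' n, Measure.infinitePi ν (A n) = ⊤ := by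
    by_contra hne
    apply hdiv
    have h1 := ENNReal.summable_toReal hne
    obtain ⟨n0, hn0⟩ := exists_nat_gt (1 / (1 - θ))
    rw [← summable_nat_add_iff n0] at h1 ⊢
    refine Summable.of_nonneg_of_le (fun n => Set.indicator_nonneg (fun p _ => by positivity) _) (fun n => ?_) h1
    set p := n + n0 with hp
    by_cases hpS : p ∈ {p : ℕ | p.Prime ∧ ∃ m : ℤ, |(p : ℝ) * θ - m| ≤ 1 / 100}
    · rw [Set.indicator_of_mem hpS]
      obtain ⟨hpp, m, hm⟩ := hpS
      have hp0 : (0 : ℝ) < p := by exact_mod_cast hpp.pos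
      have hpn : (n0 : ℝ) ≤ p := by rw [hp]; push_cast; linarith [(Nat.cast_nonneg n : (0:ℝ) ≤ n)]
      have hpt : 1 < p * (1 - θ) := by
        rw [div_lt_iff₀ (by linarith)] at hn0
        nlinarith
      rw [abs_le] at hm
      have hpθ : 0 < p * θ := by positivity
      have hm0 : 0 ≤ m := by
        have : (-1 : ℝ) < m := by linarith [hm.2]
        have : (-1 : ℤ) < m := by exact_mod_cast this
        omega
      obtain ⟨a, rfl⟩ := Int.eq_ofNat_of_zero_le hm0
      have hap : a < p := by
        have : (a : ℝ) < p := by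
          have := hm.1
          push_cast at this
          nlinarith
        exact_mod_cast this
      have hat : a ∈ t p := by
        refine ⟨hpp, ?_⟩
        have : θ - (a : ℝ) / p = (p * θ - a) / p := by field_simp
        rw [this, abs_div, abs_of_pos hp0, div_le_div_iff₀ hp0 (by positivity)]
        have : |p * θ - (a : ℝ)| ≤ 1 / 100 := abs_le.2 (by simpa using hm)
        nlinarith
      rw [hAp]
      have h2 : 1 / (p : ENNReal) ≤ ν p (t p) := by
        rw [← hν p a hap]
        exact measure_mono (by simpa using hat)
      have h3 := ENNReal.toReal_mono (measure_ne_top _ _) h2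
      simpa using h3
    · rw [Set.indicator_of_notMem hpS]
      exact ENNReal.toReal_nonneg
  have hone := measure_limsup_eq_one hAm hind hsum
  have hae : ∀ᵐ ω ∂(Measure.infinitePi ν), ω ∈ Filter.limsup A Filter.atTop := by
    rw [← mem_ae_iff_prob_eq_one (MeasurableSet.measurableSet_limsup hAm)] at hone
    exact hone
  filter_upwards [hae] with ω hω
  rw [Filter.mem_limsup_iff_frequently_mem, Nat.frequently_atTop_iff_infinite] at hω
  exact hω

open ProbabilityTheory in
theorem aux_exists_good_prime_approximations :
    ∃ a : ℕ → ℕ, (∀ p : ℕ, p.Prime → a p < p) ∧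
      ∀ᵐ θ ∂(volume.restrict (Set.Icc (0:ℝ) 1)),
        {p : ℕ | p.Prime ∧ |θ - (a p : ℝ) / p| ≤ 1 / (100 * p)}.Infinite := by
  set ν : ℕ → Measure ℕ := fun n => uniformOn ((Finset.range (max n 1) : Finset ℕ) : Set ℕ) with hνdef
  have : ∀ n, IsProbabilityMeasure (ν n) := fun n =>
    isProbabilityMeasure_uniformOn (Finset.finite_toSet _) ⟨0, by simp⟩
  have hν : ∀ n a : ℕ, a < n → ν n {a} = 1 / (n : ENNReal) := by
    intro n a ha
    have := uniformOn_apply_finset (s := Finset.range (max n 1)) (t := {a})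
    rw [Finset.inter_singleton_of_mem (by simp [ha])] at this
    rw [Finset.coe_singleton] at this
    rw [hνdef]
    simp only
    rw [this]
    simp [Nat.max_eq_left (by omega : 1 ≤ n)]
  have hlt : ∀ᵐ ω ∂(Measure.infinitePi ν), ∀ p : ℕ, p.Prime → ω p < p := by
    rw [ae_all_iff]
    intro p
    by_cases hp : p.Prime
    · have h1 : ∀ᵐ a ∂(ν p), a < p := by
        have h2 : ν p (Finset.range (max p 1) : Finset ℕ) = 1 :=
          uniformOn_self (Finset.finite_toSet _) ⟨0, by simp⟩
        rw [← mem_ae_iff_prob_eq_one MeasurableSet.of_discrete] at h2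
        filter_upwards [h2] with a ha
        simpa [Nat.max_eq_left hp.one_le] using ha
      have h3 := (measurePreserving_eval_infinitePi ν p).quasiMeasurePreserving.ae h1
      filter_upwards [h3] with ω hω _ using hω
    · simp [hp]
  have hmain : ∀ᵐ θ ∂(volume.restrict (Set.Icc (0:ℝ) 1)), ∀ᵐ ω ∂(Measure.infinitePi ν),
      {p : ℕ | p.Prime ∧ |θ - (ω p : ℝ) / p| ≤ 1 / (100 * p)}.Infinite := by
    have hmem := ae_restrict_mem (μ := volume) (measurableSet_Icc (a := (0:ℝ)) (b := 1))
    have h0 : ∀ᵐ θ ∂(volume.restrict (Set.Icc (0:ℝ) 1)), θ ≠ 0 := Measure.ae_ne _ _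
    have h1 : ∀ᵐ θ ∂(volume.restrict (Set.Icc (0:ℝ) 1)), θ ≠ 1 := Measure.ae_ne _ _
    filter_upwards [ae_not_summable, hmem, h0, h1] with θ hθ hm h0 h1
    exact random_choice θ (lt_of_le_of_ne hm.2 h1) (lt_of_le_of_ne hm.1 h0.symm) ν hν hθ
  have hmeas : MeasurableSet {x : ℝ × (ℕ → ℕ) |
      {p : ℕ | p.Prime ∧ |x.1 - (x.2 p : ℝ) / p| ≤ 1 / (100 * p)}.Infinite} := by
    set A : ℕ → Set (ℝ × (ℕ → ℕ)) := fun p =>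
      {x | p.Prime ∧ |x.1 - (x.2 p : ℝ) / p| ≤ 1 / (100 * p)} with hA
    have hAm : ∀ p, MeasurableSet (A p) := by
      intro p
      refine MeasurableSet.inter (s₁ := {x : ℝ × (ℕ → ℕ) | p.Prime})
        (s₂ := {x : ℝ × (ℕ → ℕ) | |x.1 - (x.2 p : ℝ) / p| ≤ 1 / (100 * p)}) (MeasurableSet.const _) ?_
      refine measurableSet_le ?_ measurable_const
      have : Measurable (fun x : ℝ × (ℕ → ℕ) => ((x.2 p : ℕ) : ℝ)) :=
        (measurable_from_top (f := fun n : ℕ => (n : ℝ))).comp ((measurable_pi_apply p).comp measurable_snd)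
      exact (measurable_fst.sub (this.div_const _)).abs
    convert MeasurableSet.measurableSet_limsup hAm using 1
    ext x
    rw [Filter.mem_limsup_iff_frequently_mem, Nat.frequently_atTop_iff_infinite]
    rfl
  rw [Measure.ae_ae_comm hmeas] at hmain
  obtain ⟨ω, h1, h2⟩ := (hmain.and hlt).exists
  exact ⟨ω, h2, h1⟩

/-- There is a family of integers `(a_p)` with `0 ≤ a_p < p` for every prime `p` such that
for Lebesgue-almost every `θ ∈ [0,1]` there are infinitely many primes `p` with
`|θ - a_p/p| ≤ 1/(100p)`. -/
theorem exists_good_prime_approximations :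
    ∃ a : ℕ → ℕ, (∀ p : ℕ, p.Prime → a p < p) ∧
      ∀ᵐ θ ∂(volume.restrict (Set.Icc (0:ℝ) 1)),
        {p : ℕ | p.Prime ∧ |θ - (a p : ℝ) / p| ≤ 1 / (100 * p)}.Infinite :=
  aux_exists_good_prime_approximations
end
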